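/- arXiv:2206.05372 — 2 statements merged into one kernel-verified Lean document; each statement's English description precedes it below -/
import Mathlib

section
/- The elliptic curve E₁ over ℂ(t) given by the Weierstrass equation y² = x³ + t + t⁻¹ has trivial Mordell–Weil group: the point at infinity is its only ℂ(t)-rational point. Equivalently, there is no pair (x,y) ∈ ℂ(t) × ℂ(t) with y² = x³ + t + t⁻¹. -/
open Polynomial

lemma coeff_pth_mul {F : Type*} [Field F] (p : ℕ) [Fact p.Prime] [CharP F p] (G f : F[X])
    (hf : ∀ s : ℕ, ((s : F) + 1 = 0) → f.coeff s = 0) (s : ℕ) (hs : (s : F) + 1 = 0) :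
    (G ^ p * f).coeff s = 0 := by
  rw [coeff_mul]
  refine Finset.sum_eq_zero fun uv huv => ?_
  rw [Finset.HasAntidiagonal.mem_antidiagonal] at huv
  obtain ⟨u, v⟩ := uv
  simp only at huv ⊢
  by_cases hu : (u : F) = 0
  · rw [hf v, mul_zero]
    rw [← huv] at hs
    push_cast at hs
    rw [hu] at hs
    linear_combination hs
  · have h1 : derivative (G ^ p) = 0 := by
      rw [derivative_pow]; simp
    cases u with
    | zero => simp at hu
    | succ u =>
      have h2 := congrArg (fun g => coeff g u) h1
      simp only [coeff_derivative, coeff_zero] at h2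
      push_cast at hu
      rcases mul_eq_zero.1 h2 with h | h
      · rw [h, zero_mul]
      · exact absurd h hu

lemma coeff_special {F : Type*} [Field F] (N : ℕ) (hN : N % 2 = 1) [CharP F (6 * N + 1)]
    (s : ℕ) (hs : (s : F) + 1 = 0) :
    ((X : F[X]) ^ N * (X ^ 2 + 1) ^ (5 * N)).coeff s = 0 := by
  have hE : ((X : F[X]) ^ 2 + 1) ^ (5 * N) = expand F 2 ((X + 1) ^ (5 * N)) := by simp
  rw [coeff_X_pow_mul']
  split_ifs with h
  · rw [hE, coeff_expand (by norm_num)]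
    split_ifs with h2
    · apply coeff_eq_zero_of_natDegree_lt
      have hd : ((X + 1 : F[X]) ^ (5 * N)).natDegree ≤ 5 * N := by
        refine natDegree_pow_le.trans ?_
        have : (X + 1 : F[X]).natDegree ≤ 1 := by compute_degree
        nlinarith
      refine lt_of_le_of_lt hd ?_
      have h3 : ((s + 1 : ℕ) : F) = 0 := by push_cast; exact hs
      rw [CharP.cast_eq_zero_iff F (6 * N + 1)] at h3
      obtain ⟨c, hc⟩ := h3
      obtain ⟨v, hv⟩ := h2
      have hc2 : c = 0 ∨ c = 1 ∨ 2 ≤ c := by omega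
      rcases hc2 with rfl | rfl | hc2
      · omega
      · omega
      · have : (6 * N + 1) * 2 ≤ (6 * N + 1) * c := Nat.mul_le_mul_left _ hc2
        omega
    · rfl
  · rfl

lemma charp_step {F : Type*} [Field F] (N : ℕ) (hN : N % 2 = 1) (hp : (6 * N + 1).Prime)
    [CharP F (6 * N + 1)] (U V d : F[X]) (c : F) (A : F[X])
    (hA : A = X ^ 5 * (X ^ 2 + 1) * d ^ 6)
    (hd : d ≠ 0) (hU : U ≠ 0) (hdeg : 1 ≤ U.natDegree)
    (hne : (3 * (U.natDegree : F) - (7 + 6 * (d.natDegree : F))) ≠ 0)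
    (h1 : V ^ 2 = U ^ 3 + A)
    (h2 : 3 * A * derivative U - derivative A * U = C c * X ^ 4 * d ^ 5 * V) : False := by
  have : Fact (6 * N + 1).Prime := ⟨hp⟩
  have hp0 : (6 * (N : F) + 1) = 0 := by
    have := CharP.cast_eq_zero F (6 * N + 1)
    push_cast at this; exact this
  have hp0' : (6 * (N : F[X]) + 1) = 0 := by
    have := congrArg (C : F → F[X]) hp0
    simp only [map_add, map_mul, map_natCast, map_one, map_zero, map_ofNat] at this
    exact this
  have hQ : (X ^ 2 + 1 : F[X]).natDegree = 2 := by
    compute_degree!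
  have hQ0 : (X ^ 2 + 1 : F[X]) ≠ 0 := by
    intro h; rw [h] at hQ; simp at hQ
  have hAd : A.natDegree = 7 + 6 * d.natDegree := by
    rw [hA, natDegree_mul (by simp [hQ0]) (by simp [hd]), natDegree_mul (by simp) hQ0, hQ]
    simp
  have hA0 : A ≠ 0 := by
    intro h; rw [h] at hAd; simp at hAd; omega
  set a := U.natDegree with ha
  set α := A.natDegree with hα
  set s := (6 * N + 1) * (a + α) - 1 with hs
  have hs1 : s + 1 = (6 * N + 1) * (a + α) := by
    have : 0 < (6 * N + 1) * (a + α) := by positivity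
    omega
  have hs0 : (s : F) + 1 = 0 := by
    have := congrArg (Nat.cast : ℕ → F) hs1
    push_cast at this
    rw [this, hp0, zero_mul]
  have hder : ∀ g : F[X], (derivative g).coeff s = 0 := fun g => by
    rw [coeff_derivative, hs0, mul_zero]
  set D := 3 * A * derivative U - derivative A * U with hD
  -- right-hand side
  have hR : (A ^ (5 * N) * (D * V ^ (6 * N))).coeff s = 0 := by
    have : A ^ (5 * N) * (D * V ^ (6 * N)) =
        C c * ((X ^ 4 * d ^ 5 * V) ^ (6 * N + 1) * (X ^ N * (X ^ 2 + 1) ^ (5 * N))) := by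
      rw [h2, hA, mul_pow, mul_pow]; ring
    rw [this, coeff_C_mul, coeff_pth_mul (6 * N + 1) _ _ (coeff_special N hN) s hs0, mul_zero]
  have hL : A ^ (5 * N) * (D * V ^ (6 * N)) = ∑ j ∈ Finset.range (3 * N + 1),
      C ((Nat.choose (3 * N) j : F)) * (A ^ (5 * N) * D * (U ^ (3 * j) * A ^ (3 * N - j))) := by
    have : V ^ (6 * N) = (U ^ 3 + A) ^ (3 * N) := by rw [← h1]; ring
    rw [this, add_pow, Finset.mul_sum, Finset.mul_sum]
    refine Finset.sum_congr rfl fun j _ => ?_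
    rw [← pow_mul]; simp only [map_natCast]; ring
  have hterm : ∀ j ∈ Finset.range (3 * N + 1), j ≠ 2 * N →
      (C ((Nat.choose (3 * N) j : F)) *
        (A ^ (5 * N) * D * (U ^ (3 * j) * A ^ (3 * N - j)))).coeff s = 0 := by
    intro j hj hj2
    rw [Finset.mem_range] at hj
    rw [coeff_C_mul]
    obtain ⟨i, hi⟩ : ∃ i, 3 * N = j + i := ⟨3 * N - j, by omega⟩
    have hi2 : 3 * N - j = i := by omega
    have hnz : (3 * (j : F) + 1) ≠ 0 := by
      intro h
      have h3 : ((3 * j + 1 : ℕ) : F) = 0 := by push_cast; exact h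
      rw [CharP.cast_eq_zero_iff F (6 * N + 1)] at h3
      obtain ⟨c, hc⟩ := h3
      have hc2 : c = 0 ∨ c = 1 ∨ 2 ≤ c := by omega
      rcases hc2 with rfl | rfl | hc2
      · omega
      · omega
      · have : (6 * N + 1) * 2 ≤ (6 * N + 1) * c := Nat.mul_le_mul_left _ hc2
        omega
    have hij : (3 * (N : F[X])) = j + i := by exact_mod_cast congrArg (Nat.cast : ℕ → F[X]) hi
    have key : C (3 * (j : F) + 1) * (A ^ (5 * N) * D * (U ^ (3 * j) * A ^ (3 * N - j))) =
        C 3 * derivative (U ^ (3 * j + 1) * A ^ (5 * N + i + 1)) := by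
      rw [hi2, hD, derivative_mul, derivative_pow_succ, derivative_pow_succ]
      simp only [map_add, map_mul, map_natCast, map_one, map_ofNat]
      push_cast
      linear_combination (-A ^ (5 * N + i) * U ^ (3 * j + 1) * derivative A) *
        (4 * hp0' - 3 * hij)
    have key2 := congrArg (fun g => coeff g s) key
    simp only [coeff_C_mul, hder, mul_zero] at key2
    rw [(mul_eq_zero.1 key2).resolve_left hnz, mul_zero]
  rw [hL, finsetSum_coeff, Finset.sum_eq_single_of_mem (2 * N)
    (by rw [Finset.mem_range]; omega) hterm, coeff_C_mul] at hR
  have hch : (Nat.choose (3 * N) (2 * N) : F) ≠ 0 := by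
    intro h
    rw [CharP.cast_eq_zero_iff F (6 * N + 1)] at h
    have h3 : (6 * N + 1) ∣ (3 * N).factorial := by
      rw [← Nat.choose_mul_factorial_mul_factorial (show 2 * N ≤ 3 * N by omega), mul_assoc]
      exact Dvd.dvd.mul_right h _
    rw [hp.dvd_factorial] at h3
    omega
  have hR2 := (mul_eq_zero.1 hR).resolve_left hch
  have hform : A ^ (5 * N) * D * (U ^ (3 * (2 * N)) * A ^ (3 * N - 2 * N)) =
      C 3 * ((U ^ (6 * N) * A ^ (6 * N + 1)) * derivative U) -
        (U ^ (6 * N + 1) * A ^ (6 * N)) * derivative A := by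
    have : 3 * N - 2 * N = N := by omega
    rw [this, hD]; simp only [map_ofNat]; ring
  have cU : ∀ m, (U ^ m).coeff (m * a) = U.leadingCoeff ^ m := fun m => by
    exact coeff_pow_mul_natDegree _ _
  have cA : ∀ m, (A ^ m).coeff (m * α) = A.leadingCoeff ^ m := fun m => by
    exact coeff_pow_mul_natDegree _ _
  have dU : ∀ m, (U ^ m).natDegree ≤ m * a := fun m => natDegree_pow_le
  have dA : ∀ m, (A ^ m).natDegree ≤ m * α := fun m => natDegree_pow_le
  have cM : ∀ m k, (U ^ m * A ^ k).coeff (m * a + k * α) =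
      U.leadingCoeff ^ m * A.leadingCoeff ^ k := fun m k => by
    rw [coeff_mul_add_eq_of_natDegree_le (dU m) (dA k), cU, cA]
  have dM : ∀ m k, (U ^ m * A ^ k).natDegree ≤ m * a + k * α := fun m k =>
    natDegree_mul_le_of_le (dU m) (dA k)
  obtain ⟨a', ha'⟩ : ∃ a', a = a' + 1 := ⟨a - 1, by omega⟩
  obtain ⟨α', hα'⟩ : ∃ a', α = a' + 1 := ⟨α - 1, by omega⟩
  have cdU : (derivative U).coeff a' = U.leadingCoeff * a := by
    rw [coeff_derivative, leadingCoeff, ← ha, ha']; push_cast; rfl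
  have cdA : (derivative A).coeff α' = A.leadingCoeff * α := by
    rw [coeff_derivative, leadingCoeff, ← hα, hα']; push_cast; rfl
  have ddU : (derivative U).natDegree ≤ a' := by
    refine (natDegree_derivative_le U).trans ?_; omega
  have ddA : (derivative A).natDegree ≤ α' := by
    refine (natDegree_derivative_le A).trans ?_; omega
  have e1 : s = ((6 * N) * a + (6 * N + 1) * α) + a' := by
    zify at *; linarith
  have e2 : s = ((6 * N + 1) * a + (6 * N) * α) + α' := by
    zify at *; linarith
  have c1 : ((U ^ (6 * N) * A ^ (6 * N + 1)) * derivative U).coeff s =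
      U.leadingCoeff ^ (6 * N) * A.leadingCoeff ^ (6 * N + 1) * (U.leadingCoeff * a) := by
    rw [e1, coeff_mul_add_eq_of_natDegree_le (dM _ _) ddU, cM, cdU]
  have c2 : ((U ^ (6 * N + 1) * A ^ (6 * N)) * derivative A).coeff s =
      U.leadingCoeff ^ (6 * N + 1) * A.leadingCoeff ^ (6 * N) * (A.leadingCoeff * α) := by
    rw [e2, coeff_mul_add_eq_of_natDegree_le (dM _ _) ddA, cM, cdA]
  rw [hform, coeff_sub, coeff_C_mul, c1, c2] at hR2
  have hfin : (U.leadingCoeff ^ (6 * N + 1) * A.leadingCoeff ^ (6 * N + 1)) *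
      (3 * (a : F) - (7 + 6 * (d.natDegree : F))) = 0 := by
    have : (α : F) = 7 + 6 * (d.natDegree : F) := by rw [hAd]; push_cast; rfl
    rw [← this]
    linear_combination hR2
  rcases mul_eq_zero.1 hfin with h | h
  · simp [hU, hA0] at h
  · exact hne h

lemma exists_reduction (S : Set ℂ) (hS : S.Finite) :
    ∃ M : ℕ, ∀ p : ℕ, p.Prime → M < p →
      ∃ (F : Type) (_ : Field F) (_ : CharP F p), Nonempty (Algebra.adjoin ℤ S →+* F) := by
  have : Algebra.FiniteType ℤ (Algebra.adjoin ℤ S) := by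
    rw [← Subalgebra.fg_iff_finiteType]
    exact ⟨hS.toFinset, by simp⟩
  have : Algebra.FinitePresentation ℤ (Algebra.adjoin ℤ S) :=
    Algebra.FinitePresentation.of_finiteType.1 inferInstance
  have : Module.IsTorsionFree ℤ (Algebra.adjoin ℤ S) := inferInstance
  have : Module.Flat ℤ (Algebra.adjoin ℤ S) := inferInstance
  have hop := PrimeSpectrum.isOpenMap_comap_of_hasGoingDown_of_finitePresentation
    (R := ℤ) (S := Algebra.adjoin ℤ S)
  have hr := hop.isOpen_range
  let q0 : PrimeSpectrum (Algebra.adjoin ℤ S) := ⊥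
  obtain ⟨_, ⟨n, rfl⟩, hn1, hn2⟩ :=
    PrimeSpectrum.isTopologicalBasis_basic_opens.exists_subset_of_mem_open
    (Set.mem_range_self (f := PrimeSpectrum.comap (algebraMap ℤ (Algebra.adjoin ℤ S))) q0) hr
  have hn0 : n ≠ 0 := by
    rintro rfl
    simp at hn1
  refine ⟨n.natAbs, fun p hp hlt => ?_⟩
  have hpI : Prime (p : ℤ) := Nat.prime_iff_prime_int.1 hp
  have hpr : (Ideal.span {(p : ℤ)}).IsPrime :=
    (Ideal.span_singleton_prime hpI.ne_zero).2 hpI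
  have hmem : (⟨_, hpr⟩ : PrimeSpectrum ℤ) ∈ (PrimeSpectrum.basicOpen n : Set _) := by
    change n ∉ Ideal.span {(p : ℤ)}
    rw [Ideal.mem_span_singleton]
    intro h
    have := Int.natAbs_dvd_natAbs.2 h
    have := Nat.le_of_dvd (Int.natAbs_pos.2 hn0) this
    simp at this
    omega
  obtain ⟨q, hq⟩ := hn2 hmem
  have hqp : ((p : ℕ) : Algebra.adjoin ℤ S) ∈ q.asIdeal := by
    have h1 : (p : ℤ) ∈ (PrimeSpectrum.comap (algebraMap ℤ (Algebra.adjoin ℤ S)) q).asIdeal := by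
      rw [hq]; exact Ideal.mem_span_singleton_self _
    rw [PrimeSpectrum.comap_asIdeal, Ideal.mem_comap] at h1
    simpa using h1
  have hqP := q.isPrime
  let F := FractionRing (Algebra.adjoin ℤ S ⧸ q.asIdeal)
  let ρ : Algebra.adjoin ℤ S →+* F :=
    (algebraMap (Algebra.adjoin ℤ S ⧸ q.asIdeal) F).comp (Ideal.Quotient.mk q.asIdeal)
  have hρ : ((p : ℕ) : F) = 0 := by
    have : ρ ((p : ℕ) : Algebra.adjoin ℤ S) = 0 := by
      simp only [ρ, RingHom.comp_apply]
      rw [Ideal.Quotient.eq_zero_iff_mem.2 hqp, map_zero]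
    simpa using this
  exact ⟨F, inferInstance, (CharP.charP_iff_prime_eq_zero hp).2 hρ, ⟨ρ⟩⟩

lemma exists_poly_solution (x y : RatFunc ℂ) (h : y ^ 2 = x ^ 3 + RatFunc.X + (RatFunc.X)⁻¹) :
    ∃ U V d : ℂ[X], d ≠ 0 ∧ V ^ 2 = U ^ 3 + X ^ 5 * (X ^ 2 + 1) * d ^ 6 := by
  set φ := algebraMap ℂ[X] (RatFunc ℂ) with hφ
  have hinj : Function.Injective φ := IsFractionRing.injective _ _
  obtain ⟨a, b, hb, rfl⟩ := IsFractionRing.div_surjective (A := ℂ[X]) x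
  obtain ⟨e, f, hf, rfl⟩ := IsFractionRing.div_surjective (A := ℂ[X]) y
  have hb0 : b ≠ 0 := nonZeroDivisors.ne_zero hb
  have hf0 : f ≠ 0 := nonZeroDivisors.ne_zero hf
  refine ⟨X ^ 2 * a * b * f ^ 2, X ^ 3 * e * b ^ 3 * f ^ 2, b * f, mul_ne_zero hb0 hf0, hinj ?_⟩
  have hb1 : φ b ≠ 0 := fun h => hb0 (hinj (by simpa using h))
  have hf1 : φ f ≠ 0 := fun h => hf0 (hinj (by simpa using h))
  have hX : φ X = RatFunc.X := RatFunc.algebraMap_X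
  have hX1 : (RatFunc.X : RatFunc ℂ) ≠ 0 := RatFunc.X_ne_zero
  simp only [map_mul, map_pow, map_add, map_one, hX]
  rw [← hφ] at h
  field_simp at h
  linear_combination (RatFunc.X ^ 5 * φ b ^ 3 * φ f ^ 4) * h

lemma exists_coprime_solution (U V d : ℂ[X]) (hd : d ≠ 0)
    (h : V ^ 2 = U ^ 3 + X ^ 5 * (X ^ 2 + 1) * d ^ 6) :
    ∃ U V d : ℂ[X], d ≠ 0 ∧ V ^ 2 = U ^ 3 + X ^ 5 * (X ^ 2 + 1) * d ^ 6 ∧ IsCoprime U d := by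
  induction hn : d.natDegree using Nat.strong_induction_on generalizing U V d with
  | _ n ih =>
  by_cases hc : IsCoprime U d
  · exact ⟨U, V, d, hd, h, hc⟩
  have : ∃ q, Prime q ∧ q ∣ U ∧ q ∣ d := by
    by_contra! hh
    exact hc (isCoprime_of_prime_dvd (fun h => hd h.2) fun q hq h1 h2 => hh q hq h1 h2)
  obtain ⟨q, hq, ⟨U1, rfl⟩, ⟨d1, rfl⟩⟩ := this
  have hq0 := hq.ne_zero
  obtain ⟨V1, rfl⟩ : q ∣ V := hq.dvd_of_dvd_pow (n := 2)
    ⟨q ^ 2 * U1 ^ 3 + X ^ 5 * (X ^ 2 + 1) * q ^ 5 * d1 ^ 6, by rw [h]; ring⟩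
  have h1 : V1 ^ 2 = q * (U1 ^ 3 + X ^ 5 * (X ^ 2 + 1) * q ^ 3 * d1 ^ 6) :=
    mul_left_cancel₀ (pow_ne_zero 2 hq0) (by linear_combination h)
  obtain ⟨V2, rfl⟩ : q ∣ V1 := hq.dvd_of_dvd_pow (n := 2) ⟨_, h1⟩
  have h2 : q * V2 ^ 2 = U1 ^ 3 + X ^ 5 * (X ^ 2 + 1) * q ^ 3 * d1 ^ 6 :=
    mul_left_cancel₀ hq0 (by linear_combination h1)
  obtain ⟨U2, rfl⟩ : q ∣ U1 := hq.dvd_of_dvd_pow (n := 3)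
    ⟨V2 ^ 2 - X ^ 5 * (X ^ 2 + 1) * q ^ 2 * d1 ^ 6, by linear_combination -h2⟩
  have h3 : V2 ^ 2 = q * (q * U2 ^ 3 + X ^ 5 * (X ^ 2 + 1) * q * d1 ^ 6) :=
    mul_left_cancel₀ hq0 (by linear_combination h2)
  obtain ⟨V3, rfl⟩ : q ∣ V2 := hq.dvd_of_dvd_pow (n := 2) ⟨_, h3⟩
  have h4 : V3 ^ 2 = U2 ^ 3 + X ^ 5 * (X ^ 2 + 1) * d1 ^ 6 :=
    mul_left_cancel₀ (pow_ne_zero 2 hq0) (by linear_combination h3)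
  have hd1 : d1 ≠ 0 := right_ne_zero_of_mul hd
  refine ih d1.natDegree ?_ U2 V3 d1 hd1 h4 rfl
  rw [← hn, natDegree_mul hq0 hd1]
  have := hq.irreducible.natDegree_pos
  omega

lemma coprime_UV (U V d : ℂ[X])
    (h : V ^ 2 = U ^ 3 + X ^ 5 * (X ^ 2 + 1) * d ^ 6) (hc : IsCoprime U d) (hU : U ≠ 0) :
    IsCoprime V U := by
  refine isCoprime_of_prime_dvd (fun h => hU h.2) fun q hq hV hU => ?_
  have hq0 := hq.ne_zero
  have hnd : ¬ q ∣ d := fun hd => hq.not_isUnit (hc.isUnit_of_dvd' hU hd)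
  have hXQ : IsCoprime (X : ℂ[X]) (X ^ 2 + 1) := ⟨-X, 1, by ring⟩
  by_cases hqX : q ∣ X
  · have hass : Associated q X := hq.associated_of_dvd prime_X hqX
    have hXd : ¬ (X : ℂ[X]) ∣ d := fun hd => hnd (hass.dvd.trans hd)
    have hXp : Prime (X : ℂ[X]) := prime_X
    have hX0 := hXp.ne_zero
    obtain ⟨V1, rfl⟩ := hass.symm.dvd.trans hV
    obtain ⟨U1, rfl⟩ := hass.symm.dvd.trans hU
    have h1 : V1 ^ 2 = X * (U1 ^ 3 + X ^ 2 * (X ^ 2 + 1) * d ^ 6) :=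
      mul_left_cancel₀ (pow_ne_zero 2 hX0) (by linear_combination h)
    obtain ⟨V2, rfl⟩ : X ∣ V1 := hXp.dvd_of_dvd_pow (n := 2) ⟨_, h1⟩
    have h2 : X * V2 ^ 2 = U1 ^ 3 + X ^ 2 * (X ^ 2 + 1) * d ^ 6 :=
      mul_left_cancel₀ hX0 (by linear_combination h1)
    obtain ⟨U2, rfl⟩ : X ∣ U1 := hXp.dvd_of_dvd_pow (n := 3)
      ⟨V2 ^ 2 - X * (X ^ 2 + 1) * d ^ 6, by linear_combination -h2⟩
    have h3 : V2 ^ 2 = X * (X * U2 ^ 3 + (X ^ 2 + 1) * d ^ 6) :=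
      mul_left_cancel₀ hX0 (by linear_combination h2)
    obtain ⟨V3, rfl⟩ : X ∣ V2 := hXp.dvd_of_dvd_pow (n := 2) ⟨_, h3⟩
    have h4 : X * V3 ^ 2 = X * U2 ^ 3 + (X ^ 2 + 1) * d ^ 6 :=
      mul_left_cancel₀ hX0 (by linear_combination h3)
    have h5 : (X : ℂ[X]) ∣ (X ^ 2 + 1) * d ^ 6 := ⟨V3 ^ 2 - U2 ^ 3, by linear_combination -h4⟩
    rcases hXp.dvd_or_dvd h5 with h6 | h6
    · exact hXp.not_isUnit (hXQ.isUnit_of_dvd' dvd_rfl h6)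
    · exact hXd (hXp.dvd_of_dvd_pow h6)
  · obtain ⟨V1, rfl⟩ := hV
    obtain ⟨U1, rfl⟩ := hU
    have h1 : q ∣ X ^ 5 * (X ^ 2 + 1) * d ^ 6 :=
      ⟨q * V1 ^ 2 - q ^ 2 * U1 ^ 3, by linear_combination -h⟩
    have hQ : q ∣ X ^ 2 + 1 := by
      rcases hq.dvd_or_dvd h1 with h2 | h2
      · rcases hq.dvd_or_dvd h2 with h3 | h3
        · exact absurd (hq.dvd_of_dvd_pow h3) hqX
        · exact h3
      · exact absurd (hq.dvd_of_dvd_pow h2) hnd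
    obtain ⟨Q1, hQ1⟩ := hQ
    rw [hQ1] at h
    have h2 : q * V1 ^ 2 = q ^ 2 * U1 ^ 3 + X ^ 5 * Q1 * d ^ 6 :=
      mul_left_cancel₀ hq0 (by linear_combination h)
    have h3 : q ∣ X ^ 5 * Q1 * d ^ 6 := ⟨V1 ^ 2 - q * U1 ^ 3, by linear_combination -h2⟩
    have hQ2 : q ∣ Q1 := by
      rcases hq.dvd_or_dvd h3 with h2 | h2
      · rcases hq.dvd_or_dvd h2 with h3 | h3
        · exact absurd (hq.dvd_of_dvd_pow h3) hqX
        · exact h3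
      · exact absurd (hq.dvd_of_dvd_pow h2) hnd
    obtain ⟨Q2, rfl⟩ := hQ2
    have h4 := congrArg derivative hQ1
    simp only [derivative_add, derivative_mul, derivative_X_pow, derivative_one] at h4
    have h5 : q ∣ C 2 * X := ⟨_, by
      have : C 2 * (X : ℂ[X]) = q * (2 * derivative q * Q2 + q * derivative Q2) := by
        push_cast at h4
        simp only [map_ofNat] at h4 ⊢
        linear_combination h4
      exact this⟩
    rcases hq.dvd_or_dvd h5 with h6 | h6
    · exact hq.not_isUnit (isUnit_of_dvd_unit h6 (isUnit_C.2 (by norm_num)))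
    · exact hqX h6

lemma exists_data (U V d : ℂ[X]) (hd : d ≠ 0)
    (h : V ^ 2 = U ^ 3 + X ^ 5 * (X ^ 2 + 1) * d ^ 6) (hc : IsCoprime U d) :
    7 + 6 * d.natDegree < 3 * U.natDegree ∧ ∃ c : ℂ,
    3 * (X ^ 5 * (X ^ 2 + 1) * d ^ 6) * derivative U - derivative (X ^ 5 * (X ^ 2 + 1) * d ^ 6) * U
      = C c * X ^ 4 * d ^ 5 * V := by
  have hQ : (X ^ 2 + 1 : ℂ[X]).natDegree = 2 := by compute_degree!
  have hQ0 : (X ^ 2 + 1 : ℂ[X]) ≠ 0 := by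
    intro h; rw [h] at hQ; simp at hQ
  have hAd : (X ^ 5 * (X ^ 2 + 1) * d ^ 6).natDegree = 7 + 6 * d.natDegree := by
    rw [natDegree_mul (by simp [hQ0]) (by simp [hd]), natDegree_mul (by simp) hQ0, hQ]
    simp
  have hUd : (U ^ 3).natDegree = 3 * U.natDegree := natDegree_pow _ _
  have hVd : (V ^ 2).natDegree = 2 * V.natDegree := natDegree_pow _ _
  have hdeg : 7 + 6 * d.natDegree < 3 * U.natDegree := by
    by_contra hlt
    have hlt2 : (U ^ 3).natDegree < (X ^ 5 * (X ^ 2 + 1) * d ^ 6).natDegree := by omega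
    have := natDegree_add_eq_right_of_natDegree_lt hlt2
    rw [← h] at this
    omega
  refine ⟨hdeg, ?_⟩
  have hVU : 2 * V.natDegree = 3 * U.natDegree := by
    have hlt2 : (X ^ 5 * (X ^ 2 + 1) * d ^ 6).natDegree < (U ^ 3).natDegree := by omega
    have := natDegree_add_eq_left_of_natDegree_lt hlt2
    rw [← h] at this
    omega
  have hU0 : U ≠ 0 := by rintro rfl; simp at hdeg
  have hV0 : V ≠ 0 := by rintro rfl; simp at hVU; omega
  have hcop := coprime_UV U V d h hc hU0
  set W : ℂ[X] := 3 * (X ^ 2 + 1) * ((X * derivative U) * d - 2 * (U * (X * derivative d)))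
    - (7 * X ^ 2 + 5) * (U * d) with hW
  have hdA : derivative (X ^ 5 * (X ^ 2 + 1) * d ^ 6 : ℂ[X]) =
      (7 * X ^ 6 + 5 * X ^ 4) * d ^ 6 + 6 * X ^ 5 * (X ^ 2 + 1) * d ^ 5 * derivative d := by
    simp only [derivative_mul, derivative_pow, derivative_X, derivative_add, derivative_one]
    simp only [map_natCast]
    push_cast
    ring
  have hWA : 3 * (X ^ 5 * (X ^ 2 + 1) * d ^ 6) * derivative U -
      derivative (X ^ 5 * (X ^ 2 + 1) * d ^ 6) * U = X ^ 4 * d ^ 5 * W := by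
    rw [hdA, hW]; ring
  have h' := congrArg derivative h
  rw [derivative_add, hdA, derivative_pow, derivative_pow] at h'
  simp only [map_natCast] at h'
  push_cast at h'
  have hdvd : V ∣ W * U ^ 2 := by
    refine ⟨2 * X * (X ^ 2 + 1) * (d * derivative V - 3 * V * derivative d)
      - (7 * X ^ 2 + 5) * V * d, ?_⟩
    rw [hW]
    linear_combination (-X * (X ^ 2 + 1) * d) * h' +
      (6 * X * (X ^ 2 + 1) * derivative d + (7 * X ^ 2 + 5) * d) * h
  obtain ⟨c, hcW⟩ := (hcop.pow_right (n := 2)).dvd_of_dvd_mul_right hdvd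
  have hXd : ∀ f : ℂ[X], (X * derivative f).natDegree ≤ f.natDegree := by
    intro f
    by_cases hf : f.natDegree = 0
    · rw [derivative_of_natDegree_zero hf]; simp
    · refine natDegree_mul_le.trans ?_
      have := natDegree_derivative_le f
      rw [natDegree_X]; omega
  have hWd : W.natDegree ≤ 2 + (U.natDegree + d.natDegree) := by
    have q1 : (3 * (X ^ 2 + 1) : ℂ[X]).natDegree ≤ 2 := by compute_degree
    have q2 : (7 * X ^ 2 + 5 : ℂ[X]).natDegree ≤ 2 := by compute_degree
    have q3 : (X * derivative U * d).natDegree ≤ U.natDegree + d.natDegree :=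
      natDegree_mul_le_of_le (hXd U) le_rfl
    have q4 : (2 * (U * (X * derivative d))).natDegree ≤ 0 + (U.natDegree + d.natDegree) :=
      natDegree_mul_le_of_le (by compute_degree) (natDegree_mul_le_of_le le_rfl (hXd d))
    rw [zero_add] at q4
    rw [hW]
    refine (natDegree_sub_le _ _).trans (max_le
      (natDegree_mul_le_of_le q1 ((natDegree_sub_le _ _).trans (max_le q3 q4)))
      (natDegree_mul_le_of_le q2 natDegree_mul_le))
  have hc0 : c.natDegree = 0 := by
    by_contra hne
    have hcne : c ≠ 0 := by rintro rfl; simp at hne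
    have := natDegree_mul hV0 hcne
    rw [← hcW] at this
    omega
  refine ⟨c.coeff 0, ?_⟩
  rw [hWA, hcW, ← eq_C_of_natDegree_eq_zero hc0]
  ring

theorem stmt_0 :
    ¬ ∃ x y : RatFunc ℂ, y ^ 2 = x ^ 3 + RatFunc.X + (RatFunc.X)⁻¹ := by
  rintro ⟨x, y, hxy⟩
  obtain ⟨U₀, V₀, d₀, hd₀, h₀⟩ := exists_poly_solution x y hxy
  obtain ⟨U, V, d, hd, h, hcop⟩ := exists_coprime_solution U₀ V₀ d₀ hd₀ h₀
  obtain ⟨hdeg, c, hc⟩ := exists_data U V d hd h hcop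
  have hU : U ≠ 0 := by rintro rfl; simp at hdeg
  let S : Set ℂ := (U.coeffs : Set ℂ) ∪ (V.coeffs : Set ℂ) ∪ (d.coeffs : Set ℂ) ∪
    {c, U.leadingCoeff⁻¹, d.leadingCoeff⁻¹}
  have hS : S.Finite := by
    refine Set.Finite.union (Set.Finite.union (Set.Finite.union ?_ ?_) ?_) ?_
    · exact Finset.finite_toSet _
    · exact Finset.finite_toSet _
    · exact Finset.finite_toSet _
    · exact Set.toFinite _
  obtain ⟨M, hM⟩ := exists_reduction S hS
  set R := Algebra.adjoin ℤ S with hR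
  have hinj : Function.Injective (algebraMap R ℂ) := Subtype.val_injective
  have hsub : ∀ z ∈ S, z ∈ Set.range (algebraMap R ℂ) := fun z hz =>
    ⟨⟨z, Algebra.subset_adjoin hz⟩, rfl⟩
  have hlift : ∀ f : ℂ[X], (f.coeffs : Set ℂ) ⊆ S → ∃ g : R[X], g.map (algebraMap R ℂ) = f := by
    intro f hf
    rw [← mem_lifts, lifts_iff_coeff_lifts]
    intro n
    by_cases hn : f.coeff n = 0
    · exact ⟨0, by rw [hn, map_zero]⟩
    · exact hsub _ (hf (coeff_mem_coeffs hn))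
  obtain ⟨U', hU'⟩ := hlift U (fun z hz => Or.inl (Or.inl (Or.inl hz)))
  obtain ⟨V', hV'⟩ := hlift V (fun z hz => Or.inl (Or.inl (Or.inr hz)))
  obtain ⟨d', hd'⟩ := hlift d (fun z hz => Or.inl (Or.inr hz))
  obtain ⟨c', hc'⟩ := hsub c (Or.inr (by simp))
  obtain ⟨u', hu'⟩ := hsub U.leadingCoeff⁻¹ (Or.inr (by simp))
  obtain ⟨e', he'⟩ := hsub d.leadingCoeff⁻¹ (Or.inr (by simp))
  have hmapinj := Polynomial.map_injective (algebraMap R ℂ) hinj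
  have h' : V' ^ 2 = U' ^ 3 + X ^ 5 * (X ^ 2 + 1) * d' ^ 6 := by
    apply hmapinj
    simpa [Polynomial.map_pow, Polynomial.map_mul, Polynomial.map_add, hU', hV', hd'] using h
  have hc2 : 3 * (X ^ 5 * (X ^ 2 + 1) * d' ^ 6) * derivative U' -
      derivative (X ^ 5 * (X ^ 2 + 1) * d' ^ 6) * U' = C c' * X ^ 4 * d' ^ 5 * V' := by
    apply hmapinj
    have e3 : Polynomial.map (algebraMap R ℂ) (3 : R[X]) = 3 := Polynomial.map_ofNat _ 3
    simp only [Polynomial.map_sub, Polynomial.map_mul, Polynomial.map_pow, Polynomial.map_add,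
      Polynomial.map_one, map_X, map_C, ← derivative_map, hU', hV', hd', hc', e3]
    exact hc
  have hlU : u' * U'.leadingCoeff = 1 := by
    apply hinj
    rw [map_mul, hu', map_one, ← leadingCoeff_map_of_injective hinj, hU']
    exact inv_mul_cancel₀ (leadingCoeff_ne_zero.2 hU)
  have hld : e' * d'.leadingCoeff = 1 := by
    apply hinj
    rw [map_mul, he', map_one, ← leadingCoeff_map_of_injective hinj, hd']
    exact inv_mul_cancel₀ (leadingCoeff_ne_zero.2 hd)
  have hnU : U'.natDegree = U.natDegree := by
    rw [← hU', natDegree_map_eq_of_injective hinj]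
  have hnd : d'.natDegree = d.natDegree := by
    rw [← hd', natDegree_map_eq_of_injective hinj]
  obtain ⟨p, hpM, hp, hmod⟩ := Nat.forall_exists_prime_gt_and_modEq
    (M + 3 * U.natDegree) (q := 12) (a := 7) (by norm_num) (by norm_num)
  obtain ⟨F, _, hchar, ⟨ρ⟩⟩ := hM p hp (by omega)
  obtain ⟨N, hN, rfl⟩ : ∃ N, N % 2 = 1 ∧ p = 6 * N + 1 := by
    have : p % 12 = 7 := hmod
    exact ⟨p / 6, by omega, by omega⟩
  have hρU : ρ U'.leadingCoeff ≠ 0 := by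
    intro h0
    have := congrArg ρ hlU
    rw [map_mul, h0, mul_zero, map_one] at this
    exact zero_ne_one this
  have hρd : ρ d'.leadingCoeff ≠ 0 := by
    intro h0
    have := congrArg ρ hld
    rw [map_mul, h0, mul_zero, map_one] at this
    exact zero_ne_one this
  have nU : (U'.map ρ).natDegree = U.natDegree := by
    rw [natDegree_map_of_leadingCoeff_ne_zero ρ hρU, hnU]
  have nd : (d'.map ρ).natDegree = d.natDegree := by
    rw [natDegree_map_of_leadingCoeff_ne_zero ρ hρd, hnd]
  have hdp : d'.map ρ ≠ 0 := by
    intro h0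
    have h1 := congrArg (fun f => coeff f d'.natDegree) h0
    simp only [coeff_map, coeff_zero] at h1
    exact hρd h1
  refine charp_step N hN hp (U'.map ρ) (V'.map ρ) (d'.map ρ) (ρ c') _ rfl hdp ?_ ?_ ?_ ?_ ?_
  · intro h0
    rw [h0, natDegree_zero] at nU
    omega
  · omega
  · rw [nU, nd]
    intro h0
    have h1 : ((3 * U.natDegree - (7 + 6 * d.natDegree) : ℕ) : F) = 0 := by
      rw [Nat.cast_sub hdeg.le]; push_cast; exact h0
    rw [CharP.cast_eq_zero_iff F (6 * N + 1)] at h1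
    have := Nat.le_of_dvd (by omega) h1
    omega
  · have := congrArg (Polynomial.map ρ) h'
    simpa [Polynomial.map_pow, Polynomial.map_mul, Polynomial.map_add] using this
  · have := congrArg (Polynomial.map ρ) hc2
    have e3 : Polynomial.map ρ (3 : R[X]) = 3 := Polynomial.map_ofNat _ 3
    simp only [Polynomial.map_sub, Polynomial.map_mul, Polynomial.map_pow, Polynomial.map_add,
      Polynomial.map_one, map_X, map_C, ← derivative_map, e3] at this
    exact this
end

section
/- Let E₂ be the elliptic curve over ℂ(t) given by y² = x³ + t² + t⁻², and let K₂ = ℚ(ζ₃, 2^{1/3}) ⊆ ℂ where ζ₃ = e^{2πi/3} and 2^{1/3} is the real cube root of 2. Then every affine ℂ(t)-rational point (x, y) of E₂ has both coordinates in the subfield K₂(t) of ℂ(t), i.e., x and y are rational functions in t all of whose coefficients lie in K₂. (Thus E₂(ℂ(t)) = E₂(K₂(t)), and K₂ is the splitting field of E₂ over ℚ(t).) -/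
/-- The real cube root of `2`, viewed in `ℂ`. -/
noncomputable def cbrt2 : ℂ := ((2 : ℝ) ^ ((1 : ℝ) / 3) : ℝ)

/-- `ζ₃ = e^{2πi/3}`. -/
noncomputable def ζ3 : ℂ := Complex.exp (2 * Real.pi * Complex.I / 3)

/-- `K₂ = ℚ(ζ₃, 2^{1/3})`, as a subfield of `ℂ` (any subfield of `ℂ` contains `ℚ`). -/
noncomputable def K2 : Subfield ℂ := Subfield.closure {ζ3, cbrt2}

/-- `f ∈ K(t)`: the rational function `f ∈ ℂ(t)` can be written as a quotient of two
polynomials all of whose coefficients lie in the subfield `K ⊆ ℂ`. -/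
def memSubfieldRatFunc (K : Subfield ℂ) (f : RatFunc ℂ) : Prop :=
  ∃ p q : Polynomial ℂ, (∀ n, p.coeff n ∈ K) ∧ (∀ n, q.coeff n ∈ K) ∧ q ≠ 0 ∧
    f = algebraMap (Polynomial ℂ) (RatFunc ℂ) p / algebraMap (Polynomial ℂ) (RatFunc ℂ) q


theorem PA.lift_aut {M : Type*} [Field M] [Algebra M ℂ] {ι : Type*} (v : ι → ℂ)
    (hv : IsTranscendenceBasis M v) (ψ : MvPolynomial ι M ≃+* MvPolynomial ι M) :
    ∃ σ : ℂ →+* ℂ, ∀ p, σ (MvPolynomial.aeval v p) = MvPolynomial.aeval v (ψ p) := by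
  let := IsAlgClosed.isAlgClosure_of_transcendence_basis v hv
  let e : Algebra.adjoin M (Set.range v) ≃+* Algebra.adjoin M (Set.range v) :=
    (hv.1.aevalEquiv.symm.toRingEquiv.trans ψ).trans hv.1.aevalEquiv.toRingEquiv
  refine ⟨(IsAlgClosure.equivOfEquiv ℂ ℂ e : ℂ ≃+* ℂ).toRingHom, fun p => ?_⟩
  rw [← hv.1.algebraMap_aevalEquiv, ← hv.1.algebraMap_aevalEquiv]
  have := IsAlgClosure.equivOfEquiv_algebraMap ℂ ℂ e (hv.1.aevalEquiv p)
  refine this.trans ?_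
  simp [e]

theorem PA.exists_aut (K : Subfield ℂ) (z : ℂ) (hz : z ∉ K) :
    ∃ σ : ℂ →+* ℂ, (∀ a ∈ K, σ a = a) ∧ σ z ≠ z := by
  by_cases halg : IsAlgebraic K z
  · let M := algebraicClosure K ℂ
    have hzM : z ∈ M := by
      rw [mem_algebraicClosure_iff]; exact halg
    have : IsGalois K M := by
      have : IsAlgClosure K M := inferInstance
      infer_instance
    obtain ⟨τ, hτ⟩ : ∃ τ : M ≃ₐ[K] M, τ ⟨z, hzM⟩ ≠ ⟨z, hzM⟩ := by
      by_contra! hcon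
      have := (InfiniteGalois.mem_range_algebraMap_iff_fixed (k := K) (⟨z, hzM⟩ : M)).2 hcon
      obtain ⟨a, ha⟩ := this
      apply hz
      have h2 := congrArg (fun m : M => (m : ℂ)) ha
      simp only at h2
      rw [← h2]
      exact a.2
    obtain ⟨s, hs⟩ := exists_isTranscendenceBasis M ℂ
    obtain ⟨σ, hσ⟩ := PA.lift_aut _ hs (MvPolynomial.mapEquiv _ τ.toRingEquiv)
    have h1 : ∀ m : M, σ m = τ m := by
      intro m
      have := hσ (MvPolynomial.C m)
      simpa using this
    refine ⟨σ, fun a ha => ?_, ?_⟩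
    · have := h1 (algebraMap K M ⟨a, ha⟩)
      rw [τ.commutes] at this
      exact this
    · have := h1 ⟨z, hzM⟩
      intro h
      apply hτ
      apply Subtype.ext
      rw [← this]; exact h
  · have htr : Transcendental K z := halg
    have hind : AlgebraicIndepOn K id ({z} : Set ℂ) := by
      have := (algebraicIndependent_unique_type_iff (R := K) (x := ((↑) : ({z} : Set ℂ) → ℂ))).2
        (by simpa using htr)
      exact this
    obtain ⟨s, hzs, hs⟩ := exists_isTranscendenceBasis_superset hind
    let ψ : MvPolynomial s K ≃ₐ[K] MvPolynomial s K :=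
      AlgEquiv.ofAlgHom (MvPolynomial.aeval fun i => MvPolynomial.X i + 1)
        (MvPolynomial.aeval fun i => MvPolynomial.X i - 1) (by ext; simp) (by ext; simp)
    obtain ⟨σ, hσ⟩ := PA.lift_aut _ hs ψ.toRingEquiv
    refine ⟨σ, fun a ha => ?_, ?_⟩
    · have := hσ (MvPolynomial.C ⟨a, ha⟩)
      simp [ψ] at this
      exact this
    · have := hσ (MvPolynomial.X ⟨z, hzs rfl⟩)
      simp [ψ] at this
      simp [this]

/-- action of a field embedding on coefficients of rational functions -/
noncomputable def PA.cmap (σ : ℂ →+* ℂ) : RatFunc ℂ →+* RatFunc ℂ :=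
  RatFunc.mapRingHom (Polynomial.mapRingHom σ)
    (nonZeroDivisors_le_comap_nonZeroDivisors_of_injective _
      (Polynomial.map_injective σ σ.injective))

theorem PA.cmap_div (σ : ℂ →+* ℂ) (p q : Polynomial ℂ) :
    PA.cmap σ (algebraMap _ _ p / algebraMap _ _ q) =
      algebraMap _ _ (p.map σ) / algebraMap _ _ (q.map σ) :=
  RatFunc.map_apply_div (Polynomial.mapRingHom σ)
    (nonZeroDivisors_le_comap_nonZeroDivisors_of_injective _
      (Polynomial.map_injective σ σ.injective)) p q

theorem PA.cmap_alg (σ : ℂ →+* ℂ) (p : Polynomial ℂ) :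
    PA.cmap σ (algebraMap _ _ p) = algebraMap _ _ (p.map σ) := by
  have := PA.cmap_div σ p 1
  simpa using this

theorem PA.cmap_X (σ : ℂ →+* ℂ) : PA.cmap σ RatFunc.X = RatFunc.X := by
  have := PA.cmap_alg σ Polynomial.X
  simpa using this

theorem PA.cmap_C (σ : ℂ →+* ℂ) (a : ℂ) : PA.cmap σ (RatFunc.C a) = RatFunc.C (σ a) := by
  have := PA.cmap_alg σ (Polynomial.C a)
  simpa using this

theorem PA.mem_of_fixed (K : Subfield ℂ) (f : RatFunc ℂ)
    (hf : ∀ σ : ℂ →+* ℂ, (∀ a ∈ K, σ a = a) → PA.cmap σ f = f) :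
    (∀ n, f.num.coeff n ∈ K) ∧ (∀ n, f.denom.coeff n ∈ K) := by
  have key : ∀ σ : ℂ →+* ℂ, (∀ a ∈ K, σ a = a) →
      f.num.map σ = f.num ∧ f.denom.map σ = f.denom := by
    intro σ hσ
    have h1 := hf σ hσ
    have hd : f.denom ≠ 0 := f.denom_ne_zero
    have hd' : f.denom.map σ ≠ 0 := (Polynomial.map_ne_zero_iff σ.injective).2 hd
    have h2 : algebraMap _ (RatFunc ℂ) (f.num.map σ) / algebraMap _ _ (f.denom.map σ)
        = algebraMap _ _ f.num / algebraMap _ _ f.denom := by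
      rw [← PA.cmap_div, RatFunc.num_div_denom, h1]
    have h3 : f.num.map σ * f.denom = f.num * f.denom.map σ := by
      rw [div_eq_div_iff (by simpa using hd') (by simpa using hd)] at h2
      apply RatFunc.algebraMap_injective
      simpa using h2
    have hc : IsCoprime f.num f.denom := f.isCoprime_num_denom
    have hc' : IsCoprime (f.num.map σ) (f.denom.map σ) := by
      have := hc.map (Polynomial.mapRingHom σ)
      simpa using this
    have hmon : f.denom.Monic := f.monic_denom
    have hmon' : (f.denom.map σ).Monic := hmon.map σ
    have h4 : f.denom.map σ = f.denom := by
      apply Polynomial.eq_of_monic_of_associated hmon' hmon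
      apply associated_of_dvd_dvd
      · apply hc'.symm.dvd_of_dvd_mul_left
        exact ⟨f.num, by rw [h3]; ring⟩
      · apply hc.symm.dvd_of_dvd_mul_left
        exact ⟨f.num.map σ, by rw [← h3]; ring⟩
    refine ⟨?_, h4⟩
    rw [h4] at h3
    exact mul_right_cancel₀ hd h3
  constructor
  · intro n
    by_contra hcon
    obtain ⟨σ, h1, h2⟩ := PA.exists_aut K _ hcon
    apply h2
    have := congrArg (fun p => Polynomial.coeff p n) (key σ h1).1
    simpa using this
  · intro n
    by_contra hcon
    obtain ⟨σ, h1, h2⟩ := PA.exists_aut K _ hcon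
    apply h2
    have := congrArg (fun p => Polynomial.coeff p n) (key σ h1).2
    simpa using this


theorem PB.exists_val (L : Type) [Field L] [CharZero L] (p : ℕ) (hp : p.Prime) :
    ∃ V : ValuationSubring L, (p : L) ∈ V.nonunits := by
  let A := (Int.castRingHom L).range
  let P : A := ⟨p, ⟨(p : ℤ), by simp⟩⟩
  have hI : Ideal.span {P} ≠ ⊤ := by
    intro h
    rw [Ideal.span_singleton_eq_top] at h
    obtain ⟨⟨b, n, hn⟩, hb⟩ := h.exists_right_inv
    have h2 := congrArg Subtype.val hb
    simp [P] at h2 hn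
    rw [← hn] at h2
    have h3 : (p : ℤ) * n = 1 := by exact_mod_cast h2
    have h4 : (p : ℤ) ∣ 1 := ⟨n, h3.symm⟩
    have := Int.eq_one_of_dvd_one (by positivity) h4
    exact hp.one_lt.ne' (by exact_mod_cast this)
  obtain ⟨V, hV1, hV2⟩ := Ideal.image_subset_nonunits_valuationSubring _ hI
  refine ⟨V, hV2 ⟨P, Ideal.subset_span rfl, rfl⟩⟩

theorem PB.nst (S : Type) [CommRing S] [Nontrivial S] [Algebra ℚ S] [Algebra.FiniteType ℚ S] :
    ∃ (L : Type) (_ : Field L) (_ : Algebra ℚ L) (_ : Module.Finite ℚ L),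
      Nonempty (S →ₐ[ℚ] L) := by
  obtain ⟨m, hm⟩ := Ideal.exists_maximal S
  let iF : Field (S ⧸ m) := Ideal.Quotient.field m
  have hft : Algebra.FiniteType ℚ (S ⧸ m) :=
    Algebra.FiniteType.of_surjective (Ideal.Quotient.mkₐ ℚ m) (Ideal.Quotient.mkₐ_surjective ℚ m)
  have hfin := @finite_of_finite_type_of_isJacobsonRing ℚ (S ⧸ m) _ iF _ _ hft
  exact ⟨S ⧸ m, iF, inferInstance, hfin, ⟨Ideal.Quotient.mkₐ ℚ m⟩⟩

theorem PB.spread (G : Finset ℂ) : ∃ N : ℕ, ∀ p : ℕ, p.Prime → N < p →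
    ∃ (k : Type) (_ : Field k) (_ : CharP k p) (_ : Subring.closure (G : Set ℂ) →+* k), True := by
  classical
  let S := Algebra.adjoin ℚ (G : Set ℂ)
  have hS : Algebra.FiniteType ℚ S := by
    rw [← Subalgebra.fg_iff_finiteType]
    exact ⟨G, rfl⟩
  obtain ⟨L, _, _, _, ⟨φ⟩⟩ := PB.nst S
  have : CharZero L := algebraRat.charZero L
  have hGS : ∀ g ∈ G, g ∈ S := fun g hg => Algebra.subset_adjoin hg
  let T : Finset L := G.attach.image fun g => φ ⟨g.1, hGS _ g.2⟩
  obtain ⟨n, hn, hT⟩ := exists_integral_multiples ℤ ℚ T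
  refine ⟨n.natAbs, fun p hp hpn => ?_⟩
  obtain ⟨V, hV⟩ := PB.exists_val L p hp
  have hn' : ¬ ((n : L) ∈ V.nonunits) := by
    intro hnon
    have hcop : IsCoprime (p : ℤ) n := by
      rw [Int.isCoprime_iff_gcd_eq_one]
      have : Nat.Coprime p n.natAbs := by
        rw [hp.coprime_iff_not_dvd]
        intro hd
        have := Nat.le_of_dvd (Int.natAbs_pos.2 hn) hd
        omega
      simpa [Int.gcd] using this
    obtain ⟨a, b, hab⟩ := hcop
    have hab' : (a : L) * (p : L) + b * n = 1 := by exact_mod_cast hab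
    have h1 := V.valuation.map_add ((a : L) * (p : L)) (b * n)
    rw [hab', map_one] at h1
    rw [ValuationSubring.mem_nonunits_iff] at hnon hV
    have h_int : ∀ z : ℤ, V.valuation (z : L) ≤ 1 := fun z =>
      (V.valuation_le_one_iff _).2 (intCast_mem V z)
    rcases le_max_iff.1 h1 with h | h
    · rw [map_mul] at h
      exact absurd h (not_le.2 (lt_of_le_of_lt (mul_le_of_le_one_left' (h_int a)) hV))
    · rw [map_mul] at h
      exact absurd h (not_le.2 (lt_of_le_of_lt (mul_le_of_le_one_left' (h_int b)) hnon))
  have hnu : V.valuation (n : L) = 1 := by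
    rw [ValuationSubring.mem_nonunits_iff] at hn'
    exact le_antisymm ((V.valuation_le_one_iff _).2 (intCast_mem V n)) (not_lt.1 hn')
  have hTV : ∀ t ∈ T, t ∈ V := by
    intro t ht
    have h1 : n • t ∈ V := by
      have h2 : IsIntegral V (n • t) := (hT t ht).tower_top
      obtain ⟨w, hw⟩ := (IsIntegrallyClosed.isIntegral_iff (K := L)).1 h2
      rw [← hw]; exact w.2
    rw [← V.valuation_le_one_iff, zsmul_eq_mul, map_mul, hnu, one_mul] at h1
    exact (V.valuation_le_one_iff _).1 h1
  have hle : Subring.closure (G : Set ℂ) ≤ S.toSubring := by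
    rw [Subring.closure_le]
    exact hGS
  let ψ : Subring.closure (G : Set ℂ) →+* L := φ.toRingHom.comp (Subring.inclusion hle)
  have hψ : ∀ a, ψ a ∈ V := by
    have : Subring.closure (G : Set ℂ) ≤
        ((V.toSubring.comap φ.toRingHom).map S.toSubring.subtype) := by
      rw [Subring.closure_le]
      intro g hg
      refine ⟨⟨g, hGS _ hg⟩, ?_, rfl⟩
      exact hTV _ (Finset.mem_image.2 ⟨⟨g, hg⟩, Finset.mem_attach _ _, rfl⟩)
    rintro ⟨a, ha⟩
    obtain ⟨b, hb, hb2⟩ := this ha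
    have : Subring.inclusion hle ⟨a, ha⟩ = b := Subtype.ext hb2.symm
    simp only [ψ, RingHom.comp_apply, this]
    exact hb
  let ψ' : Subring.closure (G : Set ℂ) →+* V := ψ.codRestrict V.toSubring hψ
  refine ⟨IsLocalRing.ResidueField V, inferInstance, ?_, (IsLocalRing.residue V).comp ψ', trivial⟩
  have hp0 : ((p : ℕ) : IsLocalRing.ResidueField V) = 0 := by
    rw [← map_natCast (IsLocalRing.residue V), IsLocalRing.residue_eq_zero_iff]
    rw [← ValuationSubring.coe_mem_nonunits_iff]
    simpa using hV
  have := Fact.mk hp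
  exact (CharP.charP_iff_prime_eq_zero hp).2 hp0

open Polynomial in
theorem PB.term_deriv {k : Type*} [Field k] (r i j : ℕ) (hp : (6 * r + 5 : k) = 0)
    (hij : i + j = 3 * r + 2) (A B : k[X]) :
    3 * derivative (A ^ (3 * j + 1) * B ^ (6 * i + 1) * X ^ (5 * i + 5 * r + 5)
      * (X ^ 2 + 1) ^ (i + r + 1)) =
    ((3 * j + 1 : ℕ) : k[X]) * (A ^ (3 * j) * B ^ (6 * i) * X ^ (5 * i + 5 * r + 4)
      * (X ^ 2 + 1) ^ (i + r)) *
      (3 * X * (X ^ 2 + 1) * (derivative A * B - 2 * A * derivative B)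
        - A * B * (7 * X ^ 2 + 5)) := by
  have hp' : (6 * r + 5 : k[X]) = 0 := by
    have := congrArg C hp
    rw [map_add, map_mul, map_natCast, map_zero, map_ofNat, map_ofNat] at this
    exact this
  have hij' : (i + j : k[X]) = 3 * r + 2 := by
    have := congrArg (Nat.cast : ℕ → k[X]) hij
    push_cast at this
    exact this
  have hi : (i : k[X]) = 3 * r + 2 - j := by rw [← hij']; ring
  simp only [derivative_mul, derivative_pow, derivative_add, derivative_X, derivative_one,
    Nat.add_sub_cancel, map_natCast]
  push_cast
  rw [hi]
  have e1 : 5 * i + 5 * r + 5 = (5 * i + 5 * r + 4) + 1 := by ring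
  have e3 : 5 * i + 5 * r + 5 - 1 = 5 * i + 5 * r + 4 := by omega
  simp only [e1]
  rw [pow_succ A, pow_succ B, pow_succ X (5 * i + 5 * r + 4), pow_succ (X ^ 2 + 1 : k[X])]
  linear_combination hp' * (A ^ (3 * j) * B ^ (6 * i) * X ^ (5 * i + 5 * r + 4)
      * (X ^ 2 + 1) ^ (i + r)) * (9 * A * derivative B * X * (X ^ 2 + 1)
       + A * B * (14 * X ^ 2 + 10))

open Polynomial in
theorem PB.charp {k : Type*} [Field k] (p r s : ℕ) [hpp : Fact p.Prime] [CharP k p]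
    (hpr : p = 6 * r + 5) (hrs : r = 2 * s) (A B C' : k[X]) (c : k) (hc : c ≠ 0) (hC : C' ≠ 0)
    (h1 : C' ^ 2 = A ^ 3 + X ^ 5 * (X ^ 2 + 1) * B ^ 6)
    (h2 : 3 * X * (X ^ 2 + 1) * (derivative A * B - 2 * A * derivative B)
        - A * B * (7 * X ^ 2 + 5) = C c * C') : False := by
  have hp0 : (6 * r + 5 : k) = 0 := by
    have := CharP.cast_eq_zero k p
    rw [hpr] at this
    push_cast at this
    exact this
  have hne : ∀ j ≤ 3 * r + 2, ((3 * j + 1 : ℕ) : k) ≠ 0 := by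
    intro j hj h0
    rw [CharP.cast_eq_zero_iff k p] at h0
    obtain ⟨q, hq⟩ := h0
    have : q < 2 := by
      by_contra hcon
      have : p * 2 ≤ p * q := Nat.mul_le_mul_left _ (by omega)
      omega
    interval_cases q <;> omega
  have h3 : (3 : k) ≠ 0 := by
    intro h0
    have : ((3 : ℕ) : k) = 0 := by exact_mod_cast h0
    rw [CharP.cast_eq_zero_iff k p] at this
    have := Nat.le_of_dvd (by norm_num) this
    omega
  let G : k[X] := ∑ m ∈ Finset.HasAntidiagonal.antidiagonal (3 * r + 2),
    C (((3 * r + 2).choose m.1 : k) * 3 / ((3 * m.1 + 1 : ℕ) : k)) *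
     (A ^ (3 * m.1 + 1) * B ^ (6 * m.2 + 1) * X ^ (5 * m.2 + 5 * r + 5)
      * (X ^ 2 + 1) ^ (m.2 + r + 1))
  have hG : derivative G = C c * C' ^ p * (X ^ (5 * r + 4) * (X ^ 2 + 1) ^ r) := by
    have e1 : C' ^ p = C' * (C' ^ 2) ^ (3 * r + 2) := by
      rw [← pow_mul, ← pow_succ']; congr 1; omega
    rw [e1, h1, (Commute.all _ _).add_pow']
    rw [derivative_sum, ← mul_assoc (C c) C', ← h2, Finset.mul_sum, Finset.sum_mul]
    apply Finset.sum_congr rfl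
    rintro ⟨j, i⟩ hm
    rw [Finset.HasAntidiagonal.mem_antidiagonal] at hm
    simp only at hm ⊢
    have hj := hne j (by omega)
    have ht := PB.term_deriv r i j hp0 (by omega) A B
    rw [derivative_C_mul]
    have e2 : C (((3 * r + 2).choose j : k) * 3 / ((3 * j + 1 : ℕ) : k)) =
       C (((3 * r + 2).choose j : k) / ((3 * j + 1 : ℕ) : k)) * 3 := by
      rw [mul_div_right_comm, C_mul]; congr 1
    rw [e2, mul_assoc, ht]
    have e3 : C (((3 * r + 2).choose j : k) / ((3 * j + 1 : ℕ) : k)) * ((3 * j + 1 : ℕ) : k[X]) =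
      ((3 * r + 2).choose j : k[X]) := by
      rw [← map_natCast C (3 * j + 1), ← C_mul, div_mul_cancel₀ _ hj, map_natCast]
    rw [← mul_assoc, ← mul_assoc, e3, nsmul_eq_mul, mul_pow (X ^ 5 * (X ^ 2 + 1)), mul_pow (X ^ 5)]
    ring
  have hGc : (derivative G).coeff (p * C'.natDegree + (p - 1)) = 0 := by
    rw [coeff_derivative]
    have : ((p * C'.natDegree + (p - 1) : ℕ) : k) + 1 = 0 := by
      have e : ((p * C'.natDegree + (p - 1) + 1 : ℕ) : k) = 0 := by
        rw [CharP.cast_eq_zero_iff k p]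
        have : 0 < p := hpp.out.pos
        exact ⟨C'.natDegree + 1, by rw [mul_add]; omega⟩
      push_cast at e ⊢
      exact e
    rw [this, mul_zero]
  rw [hG, mul_assoc, coeff_C_mul] at hGc
  have hGc := (mul_eq_zero.1 hGc).resolve_left hc
  rw [coeff_mul, Finset.sum_eq_single (p * C'.natDegree, p - 1)] at hGc
  · simp only at hGc
    rcases mul_eq_zero.1 hGc with h | h
    · rw [coeff_pow_mul_natDegree] at h
      exact hC (leadingCoeff_eq_zero.1 (pow_eq_zero_iff (by omega) |>.1 h))
    · have e : p - 1 = 2 * s + (5 * r + 4) := by omega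
      rw [e, coeff_X_pow_mul] at h
      have e2 : ((X : k[X]) ^ 2 + 1) ^ r = expand k 2 ((X + 1) ^ r) := by simp
      rw [e2, mul_comm, coeff_expand_mul (by norm_num), coeff_X_add_one_pow,
        CharP.cast_eq_zero_iff k p] at h
      have h5 : p ∣ r.factorial := by
        rw [← Nat.choose_mul_factorial_mul_factorial (show s ≤ r by omega), mul_assoc]
        exact Dvd.dvd.mul_right h _
      rw [hpp.out.dvd_factorial] at h5
      omega
  · rintro ⟨a, b⟩ hab hne
    rw [Finset.HasAntidiagonal.mem_antidiagonal] at hab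
    simp only at hab ⊢
    by_cases hb : p + r ≤ b
    · have : (X ^ (5 * r + 4) * (X ^ 2 + 1) ^ r : k[X]).coeff b = 0 := by
        apply coeff_eq_zero_of_natDegree_lt
        have hd : (X ^ (5 * r + 4) * (X ^ 2 + 1) ^ r : k[X]).natDegree ≤ 5 * r + 4 + r * 2 := by
          refine natDegree_mul_le_of_le (natDegree_X_pow_le _) (natDegree_pow_le_of_le _ ?_)
          compute_degree
        omega
      rw [this, mul_zero]
    · have : (C' ^ p).coeff a = 0 := by
        by_cases ha : p * C'.natDegree < a
        · apply coeff_eq_zero_of_natDegree_lt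
          rw [natDegree_pow]; exact ha
        · rw [← map_frobenius_expand p, coeff_map, coeff_expand hpp.out.pos, if_neg, map_zero]
          rintro ⟨q, rfl⟩
          have hq : C'.natDegree ≠ q := by
            rintro rfl
            apply hne
            simp only [Prod.mk.injEq, true_and]
            omega
          have : q + 1 ≤ C'.natDegree := by
            have := Nat.le_of_mul_le_mul_left (not_lt.1 ha) hpp.out.pos
            omega
          have := Nat.mul_le_mul_left p this
          rw [mul_add] at this
          omega
      rw [this, zero_mul]
  · simp

open Polynomial in
theorem PB.char0 (A B C' : ℂ[X]) (c : ℂ) (hc : c ≠ 0) (hC : C' ≠ 0)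
    (h1 : C' ^ 2 = A ^ 3 + X ^ 5 * (X ^ 2 + 1) * B ^ 6)
    (h2 : 3 * X * (X ^ 2 + 1) * (derivative A * B - 2 * A * derivative B)
        - A * B * (7 * X ^ 2 + 5) = C c * C') : False := by
  classical
  let G : Finset ℂ := A.coeffs ∪ B.coeffs ∪ C'.coeffs ∪ {c, c⁻¹, C'.leadingCoeff⁻¹}
  let R := Subring.closure (G : Set ℂ)
  have hGR : ∀ g ∈ G, g ∈ R := fun g hg => Subring.subset_closure hg
  have lift : ∀ P : ℂ[X], P.coeffs ⊆ G → ∃ Q : R[X], Q.map R.subtype = P := by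
    intro P hP
    have hP' : (P.coeffs : Set ℂ) ⊆ R := fun a ha => hGR a (hP ha)
    refine ⟨P.toSubring R hP', ?_⟩
    ext n; simp
  obtain ⟨A1, hA⟩ := lift A (fun a ha => by simp [G, ha])
  obtain ⟨B1, hB⟩ := lift B (fun a ha => by simp [G, ha])
  obtain ⟨C1, hC1⟩ := lift C' (fun a ha => by simp [G, ha])
  let c1 : R := ⟨c, hGR _ (by simp [G])⟩
  let c2 : R := ⟨c⁻¹, hGR _ (by simp [G])⟩
  let l2 : R := ⟨C'.leadingCoeff⁻¹, hGR _ (by simp [G])⟩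
  have hc12 : c1 * c2 = 1 := Subtype.ext (by simp [c1, c2, hc])
  have hl : C1.coeff C'.natDegree * l2 = 1 := by
    apply Subtype.ext
    have : ((C1.coeff C'.natDegree : R) : ℂ) = C'.leadingCoeff := by
      rw [leadingCoeff, ← hC1, coeff_map]; rfl
    simp [l2, this, hC]
  have hinj : Function.Injective (Polynomial.map R.subtype) :=
    Polynomial.map_injective _ R.subtype_injective
  have h1' : C1 ^ 2 = A1 ^ 3 + X ^ 5 * (X ^ 2 + 1) * B1 ^ 6 := by
    apply hinj
    simpa [hA, hB, hC1] using h1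
  have h2' : 3 * X * (X ^ 2 + 1) * (derivative A1 * B1 - 2 * A1 * derivative B1)
        - A1 * B1 * (7 * X ^ 2 + 5) = C c1 * C1 := by
    apply hinj
    simpa [hA, hB, hC1, ← derivative_map, c1] using h2
  obtain ⟨N, hN⟩ := PB.spread G
  obtain ⟨p, hpN, hp, hp5⟩ := Nat.forall_exists_prime_gt_and_eq_mod (q := 12) (a := 5)
    (by decide) N
  obtain ⟨k, _, _, f, -⟩ := hN p hp hpN
  have : Fact p.Prime := ⟨hp⟩
  have hp5' : p % 12 = 5 := by
    have := (ZMod.natCast_eq_natCast_iff' p 5 12).1 (by simpa using hp5)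
    simpa using this
  refine PB.charp (k := k) p (2 * (p / 12)) (p / 12) (by omega) rfl (A1.map f) (B1.map f) (C1.map f) (f c1)
    ?_ ?_ ?_ ?_
  · intro h
    have := congrArg f hc12
    simp [h] at this
  · intro h
    have := congrArg f hl
    rw [map_mul, ← coeff_map, h] at this
    simp at this
  · have := congrArg (Polynomial.map f) h1'
    simpa using this
  · have := congrArg (Polynomial.map f) h2'
    simpa [← derivative_map] using this

open Polynomial in
theorem PB.X_not_dvd (A B C' : ℂ[X]) (hAB : IsCoprime A B)
    (h1 : C' ^ 2 = A ^ 3 + X ^ 5 * (X ^ 2 + 1) * B ^ 6) : ¬ X ∣ A := by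
  rintro ⟨A1, rfl⟩
  have hX : Prime (X : ℂ[X]) := prime_X
  have hX0 : (X : ℂ[X]) ≠ 0 := X_ne_zero
  obtain ⟨C1, rfl⟩ : X ∣ C' := hX.dvd_of_dvd_pow (n := 2)
    ⟨X ^ 2 * A1 ^ 3 + X ^ 4 * (X ^ 2 + 1) * B ^ 6, by rw [h1]; ring⟩
  have h2 : C1 ^ 2 = X * A1 ^ 3 + X ^ 3 * (X ^ 2 + 1) * B ^ 6 := by
    apply mul_left_cancel₀ (pow_ne_zero 2 hX0)
    linear_combination h1
  obtain ⟨C2, rfl⟩ : X ∣ C1 := hX.dvd_of_dvd_pow (n := 2)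
    ⟨A1 ^ 3 + X ^ 2 * (X ^ 2 + 1) * B ^ 6, by rw [h2]; ring⟩
  have h3 : X * C2 ^ 2 = A1 ^ 3 + X ^ 2 * (X ^ 2 + 1) * B ^ 6 := by
    apply mul_left_cancel₀ hX0
    linear_combination h2
  obtain ⟨A2, rfl⟩ : X ∣ A1 := hX.dvd_of_dvd_pow (n := 3)
    ⟨C2 ^ 2 - X * (X ^ 2 + 1) * B ^ 6, by linear_combination -h3⟩
  have h4 : C2 ^ 2 = X ^ 2 * A2 ^ 3 + X * (X ^ 2 + 1) * B ^ 6 := by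
    apply mul_left_cancel₀ hX0
    linear_combination h3
  obtain ⟨C3, rfl⟩ : X ∣ C2 := hX.dvd_of_dvd_pow (n := 2)
    ⟨X * A2 ^ 3 + (X ^ 2 + 1) * B ^ 6, by rw [h4]; ring⟩
  have h5 : X * C3 ^ 2 = X * A2 ^ 3 + (X ^ 2 + 1) * B ^ 6 := by
    apply mul_left_cancel₀ hX0
    linear_combination h4
  have h6 : X ∣ B := hX.dvd_of_dvd_pow (n := 6)
    ⟨C3 ^ 2 - A2 ^ 3 - X * B ^ 6, by linear_combination -h5⟩
  exact hX.not_isUnit (hAB.isUnit_of_dvd' (Dvd.intro _ rfl) h6)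

open Polynomial in
theorem PB.natDegF (B : ℂ[X]) (hB : B ≠ 0) :
    (X ^ 5 * (X ^ 2 + 1) * B ^ 6).natDegree = 7 + 6 * B.natDegree := by
  have h7 : ((X : ℂ[X]) ^ 5 * (X ^ 2 + 1)).natDegree = 7 := by compute_degree!
  have h0 : ((X : ℂ[X]) ^ 5 * (X ^ 2 + 1)) ≠ 0 := by
    intro h; rw [h] at h7; simp at h7
  rw [natDegree_mul h0 (pow_ne_zero _ hB), h7, natDegree_pow]

open Polynomial in
theorem PB.degs (A B C' : ℂ[X]) (hB : B ≠ 0)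
    (h1 : C' ^ 2 = A ^ 3 + X ^ 5 * (X ^ 2 + 1) * B ^ 6) :
    2 * C'.natDegree = 3 * A.natDegree ∧ 7 + 6 * B.natDegree < 3 * A.natDegree := by
  have hF := PB.natDegF B hB
  have hA : (A ^ 3).natDegree = 3 * A.natDegree := natDegree_pow _ _
  have hC : (C' ^ 2).natDegree = 2 * C'.natDegree := natDegree_pow _ _
  rcases lt_trichotomy (3 * A.natDegree) (7 + 6 * B.natDegree) with h | h | h
  · have := natDegree_add_eq_right_of_natDegree_lt (p := A ^ 3)
      (q := X ^ 5 * (X ^ 2 + 1) * B ^ 6) (by rw [hA, hF]; exact h)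
    rw [← h1, hC, hF] at this
    omega
  · omega
  · have := natDegree_add_eq_left_of_natDegree_lt (p := A ^ 3)
      (q := X ^ 5 * (X ^ 2 + 1) * B ^ 6) (by rw [hA, hF]; exact h)
    rw [← h1, hC, hA] at this
    exact ⟨this, h⟩

open Polynomial in
theorem PB.coprimeAC (A B C' : ℂ[X]) (hAB : IsCoprime A B)
    (h1 : C' ^ 2 = A ^ 3 + X ^ 5 * (X ^ 2 + 1) * B ^ 6) : IsCoprime A C' := by
  have hXA := PB.X_not_dvd A B C' hAB h1
  rw [X_dvd_iff, coeff_zero_eq_eval_zero] at hXA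
  rw [isCoprime_iff_aeval_ne_zero_of_isAlgClosed ℂ ℂ]
  intro r
  by_contra! hcon
  obtain ⟨ha, hc⟩ := hcon
  rw [coe_aeval_eq_eval] at ha hc
  have hb : eval r B ≠ 0 := by
    rcases (isCoprime_iff_aeval_ne_zero_of_isAlgClosed ℂ ℂ A B).1 hAB r with h | h
    · rw [coe_aeval_eq_eval] at h; exact absurd ha h
    · rwa [coe_aeval_eq_eval] at h
  have e1 := congrArg (eval r) h1
  have e2 := congrArg (fun P => eval r (derivative P)) h1
  simp [derivative_pow, derivative_mul, ha, hc] at e1 e2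
  by_cases hr : r = 0
  · subst hr; exact hXA ha
  have e3 : r ^ 2 + 1 = 0 := by
    rcases e1 with (h | h) | h
    · exact absurd h hr
    · exact h
    · exact absurd h hb
  rw [e3] at e2
  have e4 : r ^ 6 * eval r B ^ 6 * 2 = 0 := by linear_combination -e2
  simp [hr, hb] at e4

open Polynomial in
theorem PB.N_ne (A B : ℂ[X]) (hB : B ≠ 0) (hA : ¬ X ∣ A)
   (h2 : 3 * X * (X ^ 2 + 1) * (derivative A * B - 2 * A * derivative B)
        - A * B * (7 * X ^ 2 + 5) = 0) : False := by
  obtain ⟨B1, hB1, hnd⟩ := exists_eq_pow_rootMultiplicity_mul_and_not_dvd B hB 0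
  generalize rootMultiplicity 0 B = b at *
  rw [C_0, sub_zero] at *
  subst hB1
  have h3 : X ^ b * (3 * (X ^ 2 + 1) * (X * derivative A * B1 - 2 * A * (b : ℂ[X]) * B1
      - 2 * X * A * derivative B1) - A * B1 * (7 * X ^ 2 + 5)) = 0 := by
    rw [← h2, derivative_mul, derivative_X_pow]
    cases b with
    | zero => simp; ring
    | succ n => simp; ring
  have h4 := (mul_eq_zero.1 h3).resolve_left (pow_ne_zero _ X_ne_zero)
  have h5 := congrArg (eval 0) h4
  rw [X_dvd_iff, coeff_zero_eq_eval_zero] at hA hnd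
  simp at h5
  have h6 : ((6 * b + 5 : ℕ) : ℂ) * (eval 0 A * eval 0 B1) = 0 := by
    push_cast; linear_combination -h5
  rcases mul_eq_zero.1 h6 with h | h
  · exact absurd (Nat.cast_eq_zero.1 h) (by omega)
  · exact mul_ne_zero hA hnd h

open Polynomial in
theorem PB.natDeg_Xd (P : ℂ[X]) : (X * derivative P).natDegree ≤ P.natDegree := by
  rw [natDegree_le_iff_coeff_eq_zero]
  intro n hn
  cases n with
  | zero => simp
  | succ n => rw [coeff_X_mul, coeff_derivative, coeff_eq_zero_of_natDegree_lt hn, zero_mul]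

open Polynomial in
theorem PB.poly (A B C' : ℂ[X]) (hAB : IsCoprime A B) (hB : B ≠ 0)
    (h1 : C' ^ 2 = A ^ 3 + X ^ 5 * (X ^ 2 + 1) * B ^ 6) : False := by
  obtain ⟨hd1, hd2⟩ := PB.degs A B C' hB h1
  have hAC := PB.coprimeAC A B C' hAB h1
  have hXA := PB.X_not_dvd A B C' hAB h1
  set N := 3 * X * (X ^ 2 + 1) * (derivative A * B - 2 * A * derivative B)
        - A * B * (7 * X ^ 2 + 5) with hN
  have hN0 : N ≠ 0 := fun h => PB.N_ne A B hB hXA h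
  have hdvd : C' ∣ A ^ 2 * N := by
    refine ⟨2 * X * (X ^ 2 + 1) * B * derivative C' - 6 * X * (X ^ 2 + 1) * derivative B * C'
      - B * (7 * X ^ 2 + 5) * C', ?_⟩
    have h3 := congrArg derivative h1
    simp only [derivative_pow, derivative_mul, derivative_add, derivative_X, derivative_one,
      map_ofNat, Nat.cast_ofNat] at h3
    norm_num at h3
    rw [hN]
    linear_combination (-X * (X ^ 2 + 1) * B) * h3 + (6 * X * (X ^ 2 + 1) * derivative B
      + B * (7 * X ^ 2 + 5)) * h1
  have hdvd2 : C' ∣ N := (hAC.symm.pow_right).dvd_of_dvd_mul_left hdvd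
  obtain ⟨M, hM⟩ := hdvd2
  have hC0 : C' ≠ 0 := fun h => hN0 (by rw [hM, h, zero_mul])
  have hM0 : M ≠ 0 := fun h => hN0 (by rw [hM, h, mul_zero])
  have hdeg : N.natDegree ≤ A.natDegree + B.natDegree + 2 := by
    have hA' := PB.natDeg_Xd A
    have hB' := PB.natDeg_Xd B
    have e : N = 3 * (X ^ 2 + 1) * ((X * derivative A) * B - 2 * (A * (X * derivative B)))
        - A * B * (7 * X ^ 2 + 5) := by rw [hN]; ring
    rw [e]
    have q1 : (3 * (X ^ 2 + 1) : ℂ[X]).natDegree ≤ 2 := by compute_degree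
    have q2 : (7 * X ^ 2 + 5 : ℂ[X]).natDegree ≤ 2 := by compute_degree
    have q3 : (2 : ℂ[X]).natDegree ≤ 0 := by compute_degree
    have q4 : (2 * (A * (X * derivative B))).natDegree ≤ A.natDegree + B.natDegree :=
      (natDegree_mul_le_of_le q3 (natDegree_mul_le_of_le le_rfl hB')).trans (by omega)
    have q5 := natDegree_mul_le_of_le q1
      (natDegree_sub_le_of_le (natDegree_mul_le_of_le hA' (le_refl B.natDegree)) q4)
    have q6 := natDegree_mul_le_of_le
      (natDegree_mul_le_of_le (le_refl A.natDegree) (le_refl B.natDegree)) q2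
    refine (natDegree_sub_le_of_le q5 q6).trans ?_
    simp only [max_self]
    omega
  have hdeg2 : M.natDegree = 0 := by
    rw [hM, natDegree_mul hC0 hM0] at hdeg
    omega
  obtain ⟨c, rfl⟩ := natDegree_eq_zero.1 hdeg2
  refine PB.char0 A B C' c (by rintro rfl; simp at hM0) hC0 h1 ?_
  rw [← hN, hM]; ring

/-- Normal form of points on `η² = ξ³ + F`. -/
theorem PB.normal (F : Polynomial ℂ) (x y : RatFunc ℂ)
    (h : y ^ 2 = x ^ 3 + algebraMap _ _ F) :
    ∃ B : Polynomial ℂ, B ≠ 0 ∧ IsCoprime x.num B ∧ x.denom = B ^ 2 ∧ y.denom = B ^ 3 ∧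
      y.num ^ 2 = x.num ^ 3 + F * B ^ 6 := by
  have hx := x.num_div_denom
  have hy := y.num_div_denom
  have hcx := x.isCoprime_num_denom
  have hcy := y.isCoprime_num_denom
  have hmx := x.monic_denom
  have hmy := y.monic_denom
  generalize x.num = p at *
  generalize x.denom = q at *
  generalize y.num = r at *
  generalize y.denom = s at *
  have hq0 : q ≠ 0 := hmx.ne_zero
  have hs0 : s ≠ 0 := hmy.ne_zero
  have e1 : r ^ 2 * q ^ 3 = s ^ 2 * (p ^ 3 + F * q ^ 3) := by
    apply RatFunc.algebraMap_injective
    have hq1 : (algebraMap _ (RatFunc ℂ)) q ≠ 0 := by simpa using hq0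
    have hs1 : (algebraMap _ (RatFunc ℂ)) s ≠ 0 := by simpa using hs0
    rw [← hx, ← hy] at h
    field_simp at h
    simp only [map_mul, map_pow, map_add]
    linear_combination h
  have d1 : s ^ 2 ∣ q ^ 3 := by
    apply (hcy.symm.pow (m := 2) (n := 2)).dvd_of_dvd_mul_left
    exact ⟨_, e1⟩
  have d2 : q ^ 3 ∣ s ^ 2 := by
    have hc : IsCoprime (q ^ 3) (p ^ 3 + F * q ^ 3) := by
      have := (hcx.symm.pow (m := 3) (n := 3)).add_mul_left_right F
      rwa [mul_comm] at this
    apply hc.dvd_of_dvd_mul_right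
    exact ⟨r ^ 2, by rw [← e1]; ring⟩
  have d3 : q ∣ s := by
    rw [← IsIntegrallyClosed.pow_dvd_pow_iff (n := 2) (by norm_num)]
    exact (pow_dvd_pow q (by norm_num)).trans d2
  obtain ⟨B, rfl⟩ := d3
  have hB : B.Monic := hmx.of_mul_monic_left hmy
  have e2 : q = B ^ 2 := by
    apply Polynomial.eq_of_monic_of_associated hmx (hB.pow 2)
    apply associated_of_dvd_dvd
    · rw [← mul_dvd_mul_iff_left (pow_ne_zero 2 hq0)]
      convert d2 using 1 <;> ring
    · rw [← mul_dvd_mul_iff_left (pow_ne_zero 2 hq0)]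
      convert d1 using 1 <;> ring
  refine ⟨B, hB.ne_zero, ?_, e2, by rw [e2]; ring, ?_⟩
  · rw [e2] at hcx
    exact IsCoprime.of_isCoprime_of_dvd_right hcx (dvd_pow_self B (by norm_num))
  · apply mul_right_cancel₀ (pow_ne_zero 6 hB.ne_zero)
    rw [e2] at e1
    linear_combination e1

theorem PB.noE1 (x y : RatFunc ℂ) (h : y ^ 2 = x ^ 3 + RatFunc.X + RatFunc.X⁻¹) : False := by
  have hX : (RatFunc.X : RatFunc ℂ) ≠ 0 := RatFunc.X_ne_zero
  obtain ⟨B, hB, hc, -, -, h2⟩ := PB.normal (Polynomial.X ^ 5 * (Polynomial.X ^ 2 + 1))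
    (RatFunc.X ^ 2 * x) (RatFunc.X ^ 3 * y) (by
      simp only [map_mul, map_pow, map_add, map_one, RatFunc.algebraMap_X]
      rw [mul_pow, h]
      field_simp
      ring)
  exact PB.poly _ _ _ hc hB h2


theorem PC.exists_sub (g : RatFunc ℂ) (hg : ¬ ∃ c, g = RatFunc.C c) :
    ∃ φ : RatFunc ℂ →+* RatFunc ℂ, (∀ a, φ (RatFunc.C a) = RatFunc.C a) ∧ φ RatFunc.X = g := by
  have htr := RatFunc.transcendental_of_ne_C g hg
  have hinj : Function.Injective (Polynomial.aeval (R := ℂ) g) :=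
    transcendental_iff_injective.1 htr
  let φ := RatFunc.liftRingHom (Polynomial.aeval (R := ℂ) g).toRingHom
    (nonZeroDivisors_le_comap_nonZeroDivisors_of_injective _ hinj)
  have hφ : ∀ p : Polynomial ℂ, φ (algebraMap _ _ p) = Polynomial.aeval g p := by
    intro p
    simp [φ]
  refine ⟨φ, fun a => ?_, ?_⟩
  · have := hφ (Polynomial.C a)
    simpa [RatFunc.algebraMap_eq_C] using this
  · have := hφ Polynomial.X
    simpa using this

theorem PC.hom_ext {K : Type*} [Field K] (φ ψ : RatFunc ℂ →+* K)
    (hC : ∀ a, φ (RatFunc.C a) = ψ (RatFunc.C a)) (hX : φ RatFunc.X = ψ RatFunc.X)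
    (f : RatFunc ℂ) : φ f = ψ f := by
  have hp : ∀ p : Polynomial ℂ, φ (algebraMap _ _ p) = ψ (algebraMap _ _ p) := by
    intro p
    induction p using Polynomial.induction_on' with
    | add p q hp hq => rw [map_add, map_add, map_add, hp, hq]
    | monomial n a =>
      rw [← Polynomial.C_mul_X_pow_eq_monomial]
      simp [hC, hX]
  rw [← f.num_div_denom, map_div₀, map_div₀, hp, hp]

theorem PC.decomp (φ : RatFunc ℂ →+* RatFunc ℂ) (hC : ∀ a, φ (RatFunc.C a) = RatFunc.C a)
    (p q : RatFunc ℂ) (h : RatFunc.X ^ 2 = φ p * RatFunc.X + φ q) (f : RatFunc ℂ) :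
    ∃ m n, f = φ m + φ n * RatFunc.X := by
  have hmul : ∀ f g : RatFunc ℂ, (∃ m n, f = φ m + φ n * RatFunc.X) →
      (∃ m n, g = φ m + φ n * RatFunc.X) → (∃ m n, f * g = φ m + φ n * RatFunc.X) := by
    rintro f g ⟨m, n, rfl⟩ ⟨m', n', rfl⟩
    refine ⟨m * m' + n * n' * q, m * n' + n * m' + n * n' * p, ?_⟩
    simp only [map_add, map_mul]
    linear_combination φ n * φ n' * h
  have hpow : ∀ k : ℕ, ∃ m n, (RatFunc.X ^ k : RatFunc ℂ) = φ m + φ n * RatFunc.X := by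
    intro k
    induction k with
    | zero => exact ⟨1, 0, by simp⟩
    | succ k ih =>
      rw [pow_succ]
      exact hmul _ _ ih ⟨0, 1, by simp⟩
  have hp : ∀ P : Polynomial ℂ, ∃ m n, algebraMap _ _ P = φ m + φ n * RatFunc.X := by
    intro P
    induction P using Polynomial.induction_on' with
    | add P Q hP hQ =>
      obtain ⟨m, n, h1⟩ := hP
      obtain ⟨m', n', h2⟩ := hQ
      exact ⟨m + m', n + n', by simp only [map_add, h1, h2]; ring⟩
    | monomial k a =>
      rw [← Polynomial.C_mul_X_pow_eq_monomial]
      simp only [map_mul, map_pow, RatFunc.algebraMap_X, RatFunc.algebraMap_C]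
      exact hmul _ _ ⟨RatFunc.C a, 0, by simp [hC]⟩ (hpow k)
  have hinv : ∀ f : RatFunc ℂ, (∃ m n, f = φ m + φ n * RatFunc.X) →
      (∃ m n, f⁻¹ = φ m + φ n * RatFunc.X) := by
    rintro f ⟨m, n, rfl⟩
    by_cases h0 : φ m + φ n * RatFunc.X = 0
    · exact ⟨0, 0, by simp [h0]⟩
    by_cases h1 : m + n * p = 0 ∧ n = 0
    · obtain ⟨h1, rfl⟩ := h1
      exact ⟨m⁻¹, 0, by simp⟩
    have hprod : (φ m + φ n * RatFunc.X) * (φ (m + n * p) - φ n * RatFunc.X) =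
        φ (m ^ 2 + m * n * p - n ^ 2 * q) := by
      simp only [map_add, map_mul, map_sub, map_pow]
      linear_combination (- φ n ^ 2) * h
    by_cases h2 : φ (m + n * p) - φ n * RatFunc.X = 0
    · by_cases hn : n = 0
      · subst hn
        exact ⟨m⁻¹, 0, by simp⟩
      · have : (φ m + φ n * RatFunc.X) = φ (2 * m + n * p) := by
          simp only [map_add, map_mul, map_ofNat] at h2 ⊢
          linear_combination -h2
        exact ⟨(2 * m + n * p)⁻¹, 0, by simp [this]⟩
    · have h3 := mul_ne_zero h0 h2
      rw [hprod] at h3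
      refine ⟨(m + n * p) / (m ^ 2 + m * n * p - n ^ 2 * q), -n / (m ^ 2 + m * n * p - n ^ 2 * q), ?_⟩
      rw [map_div₀, map_div₀, map_neg]
      apply inv_eq_of_mul_eq_one_right
      rw [div_mul_eq_mul_div, ← add_div, ← mul_div_assoc, div_eq_one_iff_eq h3, ← hprod]
      ring
  rw [← f.num_div_denom, div_eq_mul_inv]
  exact hmul _ _ (hp _) (hinv _ (hp _))


theorem PC.negX_nonconst : ¬ ∃ c, (-RatFunc.X : RatFunc ℂ) = RatFunc.C c := by
  rintro ⟨c, hc⟩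
  have h1 : (-Polynomial.X : Polynomial ℂ) = Polynomial.C c := by
    apply RatFunc.algebraMap_injective
    simpa using hc
  have := congrArg (fun p => Polynomial.coeff p 1) h1
  simp [Polynomial.coeff_C] at this

theorem PC.X2_nonconst : ¬ ∃ c, (RatFunc.X ^ 2 : RatFunc ℂ) = RatFunc.C c := by
  rintro ⟨c, hc⟩
  have h1 : (Polynomial.X ^ 2 : Polynomial ℂ) = Polynomial.C c := by
    apply RatFunc.algebraMap_injective
    simpa using hc
  have := congrArg (fun p => Polynomial.coeff p 2) h1
  simp [Polynomial.coeff_C] at this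

theorem PC.reduce (φ : RatFunc ℂ →+* RatFunc ℂ) (hφC : ∀ a, φ (RatFunc.C a) = RatFunc.C a)
    (hφX : φ RatFunc.X = RatFunc.X ^ 2) (x y : RatFunc ℂ)
    (h : y ^ 2 = x ^ 3 + RatFunc.X ^ 2 + (RatFunc.X ^ 2)⁻¹) :
    ∃ ξ η : RatFunc ℂ, η ^ 2 = ξ ^ 3 + RatFunc.X ^ 2 * (RatFunc.X ^ 2 + 1) ∧
      x = φ ξ / RatFunc.X ^ 2 ∧ y = φ η / RatFunc.X ^ 3 := by
  have hX0 : (RatFunc.X : RatFunc ℂ) ≠ 0 := RatFunc.X_ne_zero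
  obtain ⟨s, hsC, hsX⟩ := PC.exists_sub _ PC.negX_nonconst
  have hsφ : ∀ f, s (φ f) = φ f := by
    intro f
    exact PC.hom_ext (s.comp φ) φ (by simp [hφC, hsC]) (by simp [hφX, hsX]) f
  have hss : ∀ f, s (s f) = f := by
    intro f
    exact PC.hom_ext (s.comp s) (RingHom.id _) (by simp [hsC]) (by simp [hsX]) f
  have hdec := PC.decomp φ hφC 0 RatFunc.X (by simp [hφX])
  have hfix : ∀ f, s f = f → ∃ m, f = φ m := by
    intro f hf
    obtain ⟨m, n, rfl⟩ := hdec f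
    simp only [map_add, map_mul, hsφ, hsX] at hf
    have h2 : φ n * RatFunc.X = 0 := by linear_combination (-1/2) * hf
    exact ⟨m, by rw [h2, add_zero]⟩
  have hanti : ∀ f, s f = -f → ∃ n, f = φ n * RatFunc.X := by
    intro f hf
    obtain ⟨m, n, rfl⟩ := hdec f
    simp only [map_add, map_mul, hsφ, hsX] at hf
    have h2 : φ m = 0 := by linear_combination (1/2) * hf
    exact ⟨n, by rw [h2, zero_add]⟩
  have hno : ∀ x y : RatFunc ℂ, s x = x → s y = y →
      y ^ 2 = x ^ 3 + RatFunc.X ^ 2 + (RatFunc.X ^ 2)⁻¹ → False := by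
    intro x y hx hy h
    obtain ⟨x', rfl⟩ := hfix x hx
    obtain ⟨y', rfl⟩ := hfix y hy
    refine PB.noE1 x' y' (φ.injective ?_)
    simp only [map_add, map_pow, map_inv₀, hφX]
    exact h
  have hc : (s y) ^ 2 = (s x) ^ 3 + RatFunc.X ^ 2 + (RatFunc.X ^ 2)⁻¹ := by
    have := congrArg s h
    simpa [hsX] using this
  by_cases hx : s x = x
  · rw [hx, ← h] at hc
    rcases sq_eq_sq_iff_eq_or_eq_neg.1 hc with hy | hy
    · exact (hno x y hx hy h).elim
    · obtain ⟨ξ, rfl⟩ := hfix x hx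
      obtain ⟨η, rfl⟩ := hanti y hy
      refine ⟨RatFunc.X * ξ, RatFunc.X ^ 2 * η, φ.injective ?_, ?_, ?_⟩
      · simp only [map_add, map_pow, map_mul, hφX, map_one]
        field_simp at h
        linear_combination (RatFunc.X ^ 4) * h
      · simp only [map_mul, hφX]; field_simp
      · simp only [map_mul, map_pow, hφX]; field_simp
  · exfalso
    have hx' : x - s x ≠ 0 := fun h => hx (sub_eq_zero.1 h).symm
    set l := (y - s y) / (x - s x) with hl
    have hl1 : y - s y = l * (x - s x) := by rw [hl]; field_simp
    have hsl : s l = l := by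
      rw [hl, map_div₀, map_sub, map_sub, hss, hss, div_eq_div_iff (by rw [← neg_sub]; exact neg_ne_zero.2 hx') hx']; ring
    have hE : 2 * l * y - l ^ 2 * (x - s x) = x ^ 2 + x * s x + (s x) ^ 2 := by
      apply mul_left_cancel₀ hx'
      have e : s y = y - l * (x - s x) := by rw [← hl1]; ring
      rw [e] at hc
      linear_combination h - hc
    refine hno (l ^ 2 - x - s x) (l * (x - (l ^ 2 - x - s x)) - y) ?_ ?_ ?_
    · simp only [map_sub, map_pow, hsl, hss]; ring
    · simp only [map_sub, map_pow, map_mul, hsl, hss]; linear_combination hl1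
    · linear_combination h - (x - (l ^ 2 - x - s x)) * hE


section PDgeneric
open WeierstrassCurve.Affine

/-- The curve `y² = x³ + B`. -/
abbrev PD.W {L : Type*} [Field L] (B : L) : WeierstrassCurve.Affine L :=
  (⟨0, 0, 0, 0, B⟩ : WeierstrassCurve L)

variable {L : Type*} [Field L]

theorem PD.eqn_iff (B x y : L) : (PD.W B).Equation x y ↔ y ^ 2 = x ^ 3 + B := by
  rw [equation_iff]; simp

theorem PD.ns_iff [CharZero L] (B : L) (hB : B ≠ 0) (x y : L) :
    (PD.W B).Nonsingular x y ↔ y ^ 2 = x ^ 3 + B := by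
  rw [nonsingular_iff, PD.eqn_iff]
  constructor
  · exact fun h => h.1
  · intro h
    refine ⟨h, ?_⟩
    by_contra hc
    push Not at hc
    simp only [zero_mul, mul_zero, add_zero, sub_zero] at hc
    obtain ⟨h1, h2⟩ := hc
    have hy : y = 0 := by
      have : (2:L) * y = 0 := by linear_combination h2
      simpa using this
    have hx : x = 0 := by
      have : (3:L) * x ^ 2 = 0 := by linear_combination -h1
      simpa using this
    subst hx hy
    apply hB; linear_combination -h

/-- Additive-type map on points. -/
noncomputable def PD.mp [CharZero L] (B : L) (hB : B ≠ 0) (f : L →+* L) (hf : f B = B) (a : L)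
    (ha : a ^ 3 = 1) : (PD.W B).Point → (PD.W B).Point
  | .zero => .zero
  | .some x y h => .some (a * f x) (f y) ((PD.ns_iff B hB _ _).2 (by
      have h1 := (PD.ns_iff B hB _ _).1 h
      rw [← map_pow, h1, map_add, map_pow, hf]
      linear_combination -(f x) ^ 3 * ha))

theorem PD.some_congr [CharZero L] (B : L) {x y x' y' : L} (hx : x = x') (hy : y = y')
    (h : (PD.W B).Nonsingular x y) (h' : (PD.W B).Nonsingular x' y') :
    (Point.some x y h : (PD.W B).Point) = .some x' y' h' := by
  subst hx hy; rfl

variable [DecidableEq L]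

theorem PD.slope_mp [CharZero L] (B : L) (f : L →+* L) (a : L)
    (ha : a ^ 3 = 1) (x₁ x₂ y₁ y₂ : L) :
    (PD.W B).slope (a * f x₁) (a * f x₂) (f y₁) (f y₂) = a ^ 2 * f ((PD.W B).slope x₁ x₂ y₁ y₂) := by
  have ha0 : a ≠ 0 := by rintro rfl; simp at ha
  by_cases hx : x₁ = x₂
  · subst hx
    by_cases hy : y₁ = -y₂
    · simp [WeierstrassCurve.Affine.slope, hy]
    · have hy' : f y₁ ≠ - f y₂ := by
        rw [← map_neg]; exact fun h => hy (f.injective h)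
      have f3 : f 3 = 3 := map_ofNat f 3
      simp [WeierstrassCurve.Affine.slope, hy, hy', f3, map_div₀, mul_div_assoc, mul_pow]
      ring
  · have hx' : f x₁ ≠ f x₂ := fun h => hx (f.injective h)
    have hx'' : a * f x₁ ≠ a * f x₂ := fun h => hx' (mul_left_cancel₀ ha0 h)
    rw [slope_of_X_ne hx, slope_of_X_ne hx'', map_div₀, map_sub, map_sub,
      div_eq_iff (sub_ne_zero.2 hx'')]
    have := sub_ne_zero.2 hx'
    field_simp
    linear_combination (f y₂ - f y₁) * ha

theorem PD.mp_add [CharZero L] (B : L) (hB : B ≠ 0) (f : L →+* L) (hf : f B = B) (a : L)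
    (ha : a ^ 3 = 1) (P Q : (PD.W B).Point) :
    PD.mp B hB f hf a ha (P + Q) = PD.mp B hB f hf a ha P + PD.mp B hB f hf a ha Q := by
  have ha0 : a ≠ 0 := by rintro rfl; simp at ha
  rcases P with _ | ⟨x₁, y₁, h₁⟩
  · change _ = 0 + _
    rw [zero_add]; change PD.mp B hB f hf a ha (0 + Q) = _; rw [zero_add]
  rcases Q with _ | ⟨x₂, y₂, h₂⟩
  · change _ = _ + 0
    rw [add_zero]; change PD.mp B hB f hf a ha (_ + 0) = _; rw [add_zero]
  by_cases hxy : x₁ = x₂ ∧ y₁ = (PD.W B).negY x₂ y₂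
  · rw [Point.add_of_Y_eq hxy.1 hxy.2]
    simp only [PD.mp]
    rw [Point.add_of_Y_eq (by rw [hxy.1]) (by rw [hxy.2]; simp [negY])]
    rfl
  · have hxy' : ¬ (a * f x₁ = a * f x₂ ∧ f y₁ = (PD.W B).negY (a * f x₂) (f y₂)) := by
      rintro ⟨h1, h2⟩
      apply hxy
      refine ⟨f.injective (mul_left_cancel₀ ha0 h1), f.injective ?_⟩
      rw [h2]; simp [negY]
    rw [Point.add_some hxy]
    simp only [PD.mp]
    rw [Point.add_some hxy']
    apply PD.some_congr
    · rw [PD.slope_mp B f a ha]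
      simp only [addX, map_sub, map_add, map_mul, map_pow, map_zero]
      linear_combination -a * (f (slope (PD.W B) x₁ x₂ y₁ y₂)) ^ 2 * ha
    · rw [PD.slope_mp B f a ha]
      simp only [addX, addY, negAddY, negY, map_sub, map_add, map_mul, map_pow, map_zero, map_neg]
      set l := f (slope (PD.W B) x₁ x₂ y₁ y₂)
      linear_combination (a ^ 3 + 1) * l ^ 3 * ha - l * (2 * f x₁ + f x₂) * ha

theorem PD.line [CharZero L] (B : L) (hB : B ≠ 0) (x₁ y₁ x₂ y₂ : L) (h₁ : (PD.W B).Nonsingular x₁ y₁)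
    (h₂ : (PD.W B).Nonsingular x₂ y₂) :
    (x₁ = x₂ ∧ y₁ = -y₂ ∧ (Point.some x₁ y₁ h₁ + Point.some x₂ y₂ h₂ : (PD.W B).Point) = 0) ∨
    ∃ x₃ y₃ h₃ l m, (Point.some x₁ y₁ h₁ + Point.some x₂ y₂ h₂ : (PD.W B).Point) =
      Point.some x₃ y₃ h₃ ∧ y₁ = l * x₁ + m ∧ y₂ = l * x₂ + m ∧ - y₃ = l * x₃ + m ∧
      x₁ + x₂ + x₃ = l ^ 2 ∧ x₁ * x₂ + x₁ * x₃ + x₂ * x₃ = - 2 * l * m ∧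
      x₁ * x₂ * x₃ = m ^ 2 - B := by
  by_cases hxy : x₁ = x₂ ∧ y₁ = (PD.W B).negY x₂ y₂
  · left
    exact ⟨hxy.1, by rw [hxy.2]; simp [negY], Point.add_of_Y_eq hxy.1 hxy.2⟩
  · right
    refine ⟨_, _, _, (PD.W B).slope x₁ x₂ y₁ y₂, y₁ - (PD.W B).slope x₁ x₂ y₁ y₂ * x₁, Point.add_some hxy, by ring, ?_, ?_, ?_, ?_⟩
    · by_cases hx : x₁ = x₂
      · have hy : y₁ ≠ (PD.W B).negY x₂ y₂ := fun h => hxy ⟨hx, h⟩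
        have := Y_eq_of_Y_ne h₁.1 h₂.1 hx hy
        rw [this, hx]; ring
      · rw [slope_of_X_ne hx]
        have := sub_ne_zero.2 hx
        field_simp; ring
    · simp [addY, negAddY, negY]; ring
    · simp [addX]
    · have hp := addPolynomial_slope h₁.1 h₂.1 hxy
      rw [addPolynomial_eq, neg_inj, Cubic.prod_X_sub_C_eq, Cubic.toPoly_injective] at hp
      have hc := congrArg Cubic.c hp
      have hd := congrArg Cubic.d hp
      simp only [addX] at hc hd
      simp at hc hd
      simp only [addX]
      constructor
      · simp; linear_combination -hc
      · simp; linear_combination hd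



/-- Mod-cubes equivalence. -/
def PD.cub {K : Type*} [Field K] (a b : K) : Prop := ∃ z : K, z ≠ 0 ∧ a = z ^ 3 * b

theorem PD.cub_mul {K : Type*} [Field K] {a b c d : K} (h : PD.cub a b) (h' : PD.cub c d) :
    PD.cub (a * c) (b * d) := by
  obtain ⟨z, hz, rfl⟩ := h
  obtain ⟨w, hw, rfl⟩ := h'
  exact ⟨z * w, mul_ne_zero hz hw, by ring⟩

theorem PD.cub_refl {K : Type*} [Field K] (a : K) : PD.cub a a := ⟨1, one_ne_zero, by ring⟩

theorem PD.cub_trans {K : Type*} [Field K] {a b c : K} (h : PD.cub a b) (h' : PD.cub b c) :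
    PD.cub a c := by
  obtain ⟨z, hz, rfl⟩ := h
  obtain ⟨w, hw, rfl⟩ := h'
  exact ⟨z * w, mul_ne_zero hz hw, by ring⟩

theorem PD.cub_symm {K : Type*} [Field K] {a b : K} (h : PD.cub a b) : PD.cub b a := by
  obtain ⟨z, hz, rfl⟩ := h
  exact ⟨z⁻¹, inv_ne_zero hz, by field_simp⟩

/-- The descent map. -/
def PD.al {K : Type*} [Field K] (φ : L →+* K) (w : K) (B : L) : (PD.W B).Point → K
  | .zero => 1
  | .some _ y _ => φ y - w

theorem PD.al_ne {K : Type*} [Field K] (φ : L →+* K) (w : K) (B : L) (hw : w ^ 2 = φ B)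
    (hns : ∀ z : L, z ^ 2 ≠ B) (m : L) : φ m - w ≠ 0 := by
  intro h
  apply hns m
  apply φ.injective
  rw [map_pow, ← hw, sub_eq_zero.1 h]

theorem PD.al_add [CharZero L] {K : Type*} [Field K] (φ : L →+* K) (w : K) (B : L)
    (hw : w ^ 2 = φ B) (hns : ∀ z : L, z ^ 2 ≠ B) (P Q : (PD.W B).Point) :
    PD.cub (PD.al φ w B P * PD.al φ w B Q) (PD.al φ w B (P + Q)) := by
  have hB : B ≠ 0 := fun h => hns 0 (by rw [h]; ring)
  rcases P with _ | ⟨x₁, y₁, h₁⟩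
  · change PD.cub (1 * _) (PD.al φ w B (0 + Q))
    rw [zero_add, one_mul]; exact PD.cub_refl _
  rcases Q with _ | ⟨x₂, y₂, h₂⟩
  · change PD.cub (_ * 1) (PD.al φ w B (_ + 0))
    rw [add_zero, mul_one]; exact PD.cub_refl _
  have e1 := (PD.ns_iff B hB _ _).1 h₁
  rcases PD.line B hB x₁ y₁ x₂ y₂ h₁ h₂ with ⟨hx, hy, h0⟩ | ⟨x₃, y₃, h₃, l, m, h0, a1, a2, a3, b1, b2, b3⟩
  · rw [h0]
    change PD.cub ((φ y₁ - w) * (φ y₂ - w)) 1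
    refine ⟨-φ x₁, ?_, ?_⟩
    · rw [neg_ne_zero, map_ne_zero]
      rintro rfl
      apply hns y₁; rw [e1]; ring
    · have := congrArg φ e1
      simp only [map_pow, map_add] at this
      have hy' := congrArg φ hy
      rw [map_neg] at hy'
      linear_combination -this + hw + (φ y₁ - w) * hy'
  · rw [h0]
    change PD.cub ((φ y₁ - w) * (φ y₂ - w)) (φ y₃ - w)
    have e3 := (PD.ns_iff B hB _ _).1 h₃
    have hx3 : φ x₃ ≠ 0 := by
      rw [map_ne_zero]
      rintro rfl
      apply hns y₃; rw [e3]; ring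
    refine ⟨(φ m - w) / (-φ x₃), div_ne_zero (PD.al_ne φ w B hw hns m) (neg_ne_zero.2 hx3), ?_⟩
    rw [div_pow, div_mul_eq_mul_div, eq_div_iff (pow_ne_zero _ (neg_ne_zero.2 hx3))]
    have c1 := congrArg φ a1
    have c2 := congrArg φ a2
    have c3 := congrArg φ a3
    have d1 := congrArg φ b1
    have d2 := congrArg φ b2
    have d3 := congrArg φ b3
    have e3' := congrArg φ e3
    simp only [map_add, map_mul, map_neg, map_sub, map_pow, map_ofNat] at c1 c2 c3 d1 d2 d3 e3'
    have key : (φ y₁ - w) * (φ y₂ - w) * (- φ y₃ - w) = (φ m - w) ^ 3 := by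
      rw [c1, c2, c3]
      linear_combination φ l ^ 3 * d3 + φ l ^ 2 * (φ m - w) * d2 + φ l * (φ m - w) ^ 2 * d1 + φ l ^ 3 * hw
    linear_combination (φ y₃ - w) * key - (φ y₁ - w) * (φ y₂ - w) * (hw - e3')

theorem PD.al_nsmul [CharZero L] {K : Type*} [Field K] (φ : L →+* K) (w : K) (B : L)
    (hw : w ^ 2 = φ B) (hns : ∀ z : L, z ^ 2 ≠ B) (P : (PD.W B).Point) (k : ℕ) :
    PD.cub (PD.al φ w B P ^ k) (PD.al φ w B (k • P)) := by
  induction k with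
  | zero => rw [pow_zero, zero_smul]; exact PD.cub_refl _
  | succ k ih =>
    rw [pow_succ, succ_nsmul]
    exact PD.cub_trans (PD.cub_mul ih (PD.cub_refl _)) (PD.al_add φ w B hw hns _ _)

/-- Multiplication by `√-3` up to sign. -/
noncomputable def PD.T [CharZero L] (B : L) (hB : B ≠ 0) (ω : L) (hω : ω ^ 3 = 1)
    (Q : (PD.W B).Point) : (PD.W B).Point :=
  PD.mp B hB (RingHom.id L) rfl ω hω Q -
    PD.mp B hB (RingHom.id L) rfl (ω ^ 2) (by rw [← pow_mul, mul_comm, pow_mul, hω, one_pow]) Q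

theorem PD.T_some [CharZero L] (B : L) (hB : B ≠ 0) (ω : L) (hω : ω ^ 3 = 1)
    (hω2 : ω ^ 2 + ω + 1 = 0) (X Y l : L) (h) (hX : X ≠ 0) (hl : (ω - ω ^ 2) * X * l = 2 * Y) :
    ∃ h', PD.T B hB ω hω (.some X Y h) = .some (l ^ 2 + X) (-(l ^ 3 + 3 / 2 * l * X)) h' := by
  have e := (PD.ns_iff B hB _ _).1 h
  have hlam : (ω - ω ^ 2) ^ 2 = -3 := by linear_combination (ω ^ 2 - 3 * ω + 3) * hω2
  have hωn : ω - ω ^ 2 ≠ 0 := by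
    intro h0
    rw [h0] at hlam
    norm_num at hlam
  have hx : ω * X ≠ ω ^ 2 * X := by
    intro h0
    exact mul_ne_zero hωn hX (by linear_combination h0)
  have hx' : ω * X - ω ^ 2 * X ≠ 0 := sub_ne_zero.2 hx
  have e1 : l ^ 2 * X ^ 2 * (-3) = 4 * (X ^ 3 + B) := by
    rw [← e, ← hlam]; linear_combination ((ω - ω ^ 2) * X * l + 2 * Y) * hl
  have h' : (PD.W B).Nonsingular (l ^ 2 + X) (-(l ^ 3 + 3 / 2 * l * X)) := by
    rw [PD.ns_iff B hB]
    linear_combination (1/4) * e1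
  refine ⟨h', ?_⟩
  simp only [PD.T, PD.mp, RingHom.id_apply, sub_eq_add_neg, Point.neg_some]
  have hsl : (PD.W B).slope (ω * X) (ω ^ 2 * X) Y ((PD.W B).negY (ω ^ 2 * X) Y) = l := by
    rw [slope_of_X_ne hx, div_eq_iff hx']
    simp only [negY]
    linear_combination -hl
  rw [Point.add_of_X_ne hx]
  apply PD.some_congr
  · rw [hsl]; simp only [addX]
    linear_combination - X * hω2
  · rw [hsl]; simp only [addX, addY, negAddY, negY]
    linear_combination (3/2) * X * l * hω2 + (1/2) * hl

theorem PD.ker [CharZero L] {K : Type*} [Field K] (φ : L →+* K) (w : K) (B : L) (hB : B ≠ 0)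
    (hw : w ^ 2 = φ B) (hns : ∀ z : L, z ^ 2 ≠ B) (hdec : ∀ b, ∃ m n, b = φ m + φ n * w) (ω : L) (hω : ω ^ 3 = 1)
    (hω2 : ω ^ 2 + ω + 1 = 0) (P : (PD.W B).Point) (β : K) (hP : PD.al φ w B P = β ^ 3) :
    ∃ Q, P = PD.T B hB ω hω Q := by
  rcases P with _ | ⟨x, y, h⟩
  · refine ⟨0, ?_⟩
    change 0 = (0 : (PD.W B).Point) - 0
    rw [sub_zero]
  have e := (PD.ns_iff B hB _ _).1 h
  have hx0 : x ≠ 0 := by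
    rintro rfl
    apply hns y; rw [e]; ring
  change φ y - w = β ^ 3 at hP
  have hind : ∀ a b : L, φ a + φ b * w = 0 → a = 0 ∧ b = 0 := by
    intro a b hab
    have hb : b = 0 := by
      by_contra hb
      apply hns (-a / b)
      apply φ.injective
      rw [← hw, map_pow, map_div₀, map_neg]
      have hb' : φ b ≠ 0 := (map_ne_zero φ).2 hb
      rw [div_pow, div_eq_iff (pow_ne_zero _ hb')]
      linear_combination (φ a - φ b * w) * hab
    subst hb
    simpa using hab
  have hmain : ∃ m n : L, y = m ^ 3 + 3 * m * n ^ 2 * B ∧ 3 * m ^ 2 * n + n ^ 3 * B = -1 ∧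
      x = m ^ 2 - n ^ 2 * B := by
    obtain ⟨m, n, rfl⟩ := hdec β
    have hi := hind (y - (m ^ 3 + 3 * m * n ^ 2 * B)) (-1 - (3 * m ^ 2 * n + n ^ 3 * B)) (by
      simp only [map_sub, map_add, map_mul, map_pow, map_ofNat, map_neg, map_one]
      linear_combination hP + (3 * φ m * φ n ^ 2 + φ n ^ 3 * w) * hw)
    have hy := sub_eq_zero.1 hi.1
    have h1 := (sub_eq_zero.1 hi.2).symm
    have hx3 : x ^ 3 = (m ^ 2 - n ^ 2 * B) ^ 3 := by
      have : x ^ 3 = y ^ 2 - B := by rw [e]; ring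
      rw [this, hy]
      linear_combination B * (3 * m ^ 2 * n + n ^ 3 * B - 1) * h1
    have hfac : (x - (m ^ 2 - n ^ 2 * B)) * ((x - ω * (m ^ 2 - n ^ 2 * B)) * (x - ω ^ 2 * (m ^ 2 - n ^ 2 * B))) = 0 := by
      set N := m ^ 2 - n ^ 2 * B
      linear_combination hx3 - N * x * (x - N) * hω2 + N ^ 2 * (x - N) * hω
    rcases mul_eq_zero.1 hfac with h2 | h2
    · exact ⟨m, n, hy, h1, sub_eq_zero.1 h2⟩
    rcases mul_eq_zero.1 h2 with h2 | h2
    · refine ⟨ω ^ 2 * m, ω ^ 2 * n, ?_, ?_, ?_⟩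
      · rw [hy]; linear_combination -(m ^ 3 + 3 * m * n ^ 2 * B) * (ω ^ 3 + 1) * hω
      · rw [← h1]; linear_combination (3 * m ^ 2 * n + n ^ 3 * B) * (ω ^ 3 + 1) * hω
      · linear_combination h2 - ω * (m ^ 2 - n ^ 2 * B) * hω
    · refine ⟨ω * m, ω * n, ?_, ?_, ?_⟩
      · rw [hy]; linear_combination -(m ^ 3 + 3 * m * n ^ 2 * B) * hω
      · rw [← h1]; linear_combination (3 * m ^ 2 * n + n ^ 3 * B) * hω
      · linear_combination h2
  obtain ⟨m, n, hy, h1, hx⟩ := hmain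
  have hn : n ≠ 0 := by
    rintro rfl
    norm_num at h1
  have hlam : (ω - ω ^ 2) ^ 2 = -3 := by linear_combination (ω ^ 2 - 3 * ω + 3) * hω2
  have hQ : (PD.W B).Nonsingular (1 / n) ((ω - ω ^ 2) * m / n) := by
    rw [PD.ns_iff B hB]
    field_simp
    linear_combination m ^ 2 * n * hlam - h1
  obtain ⟨h', hT⟩ := PD.T_some B hB ω hω hω2 (1 / n) ((ω - ω ^ 2) * m / n) (2 * m) hQ
    (one_div_ne_zero hn) (by field_simp)
  refine ⟨_, Eq.trans ?_ hT.symm⟩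
  apply PD.some_congr
  · rw [hx]; field_simp; linear_combination -h1
  · rw [hy]; field_simp; linear_combination 3 * m * h1

end PDgeneric

section PDord
open Polynomial

/-- Order of a rational function at a point. -/
noncomputable def PD.o (r : ℂ) (f : RatFunc ℂ) : ℤ :=
  (f.num.rootMultiplicity r : ℤ) - f.denom.rootMultiplicity r

theorem PD.o_div (r : ℂ) (p q : ℂ[X]) (hp : p ≠ 0) (hq : q ≠ 0) :
    PD.o r (algebraMap _ _ p / algebraMap _ _ q) =
      (p.rootMultiplicity r : ℤ) - q.rootMultiplicity r := by
  set f : RatFunc ℂ := algebraMap _ _ p / algebraMap _ _ q with hf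
  have hp' : algebraMap ℂ[X] (RatFunc ℂ) p ≠ 0 := RatFunc.algebraMap_ne_zero hp
  have hq' : algebraMap ℂ[X] (RatFunc ℂ) q ≠ 0 := RatFunc.algebraMap_ne_zero hq
  have hf0 : f ≠ 0 := div_ne_zero hp' hq'
  have hd : f.denom ≠ 0 := f.denom_ne_zero
  have hn : f.num ≠ 0 := RatFunc.num_ne_zero hf0
  have h := f.num_div_denom
  conv_rhs at h => rw [hf]
  rw [div_eq_div_iff (RatFunc.algebraMap_ne_zero hd) hq', ← map_mul, ← map_mul] at h
  have h2 := RatFunc.algebraMap_injective ℂ h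
  have h3 := congrArg (rootMultiplicity r) h2
  rw [rootMultiplicity_mul (mul_ne_zero hn hq), rootMultiplicity_mul (mul_ne_zero hp hd)] at h3
  rw [PD.o]; omega

theorem PD.o_poly (r : ℂ) (p : ℂ[X]) (hp : p ≠ 0) :
    PD.o r (algebraMap _ _ p) = (p.rootMultiplicity r : ℤ) := by
  have := PD.o_div r p 1 hp one_ne_zero
  have h1 : rootMultiplicity r (1 : ℂ[X]) = 0 := by rw [← C_1, rootMultiplicity_C]
  rw [map_one, div_one, h1] at this
  simpa using this

theorem PD.rep (f : RatFunc ℂ) (hf : f ≠ 0) : ∃ p q : ℂ[X], p ≠ 0 ∧ q ≠ 0 ∧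
    f = algebraMap _ _ p / algebraMap _ _ q :=
  ⟨f.num, f.denom, RatFunc.num_ne_zero hf, f.denom_ne_zero, f.num_div_denom.symm⟩

theorem PD.o_mul (r : ℂ) (f g : RatFunc ℂ) (hf : f ≠ 0) (hg : g ≠ 0) :
    PD.o r (f * g) = PD.o r f + PD.o r g := by
  obtain ⟨p, q, hp, hq, rfl⟩ := PD.rep f hf
  obtain ⟨p', q', hp', hq', rfl⟩ := PD.rep g hg
  rw [div_mul_div_comm, ← map_mul, ← map_mul, PD.o_div _ _ _ hp hq, PD.o_div _ _ _ hp' hq',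
    PD.o_div _ _ _ (mul_ne_zero hp hp') (mul_ne_zero hq hq'), rootMultiplicity_mul (mul_ne_zero hp hp'),
    rootMultiplicity_mul (mul_ne_zero hq hq')]
  push_cast; ring

theorem PD.o_one (r : ℂ) : PD.o r 1 = 0 := by simp [PD.o, ← C_1, rootMultiplicity_C, -map_one]

theorem PD.o_C (r c : ℂ) : PD.o r (RatFunc.C c) = 0 := by
  simp [PD.o, ← C_1, rootMultiplicity_C, -map_one]

theorem PD.o_pow (r : ℂ) (f : RatFunc ℂ) (hf : f ≠ 0) (k : ℕ) :
    PD.o r (f ^ k) = k * PD.o r f := by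
  induction k with
  | zero => simp [PD.o_one]
  | succ k ih => rw [pow_succ, PD.o_mul r _ _ (pow_ne_zero _ hf) hf, ih]; push_cast; ring

theorem PD.o_inv (r : ℂ) (f : RatFunc ℂ) (hf : f ≠ 0) : PD.o r f⁻¹ = - PD.o r f := by
  have := PD.o_mul r f f⁻¹ hf (inv_ne_zero hf)
  rw [mul_inv_cancel₀ hf, PD.o_one] at this
  omega

theorem PD.o_neg (r : ℂ) (f : RatFunc ℂ) (hf : f ≠ 0) : PD.o r (-f) = PD.o r f := by
  have h : -f = RatFunc.C (-1) * f := by simp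
  rw [h, PD.o_mul r _ _ (by simp) hf, PD.o_C, zero_add]

theorem PD.o_lin (r s : ℂ) : PD.o r (RatFunc.X - RatFunc.C s) = if s = r then 1 else 0 := by
  have h : (RatFunc.X - RatFunc.C s : RatFunc ℂ) = algebraMap _ _ (X - C s) := by
    simp [RatFunc.algebraMap_X, RatFunc.algebraMap_C]
  rw [h, PD.o_poly _ _ (X_sub_C_ne_zero s)]
  classical
  rw [rootMultiplicity_X_sub_C]
  by_cases h1 : s = r
  · rw [if_pos h1.symm, if_pos h1]; rfl
  · rw [if_neg (Ne.symm h1), if_neg h1]; rfl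

theorem PD.lin_ne (s : ℂ) : (RatFunc.X - RatFunc.C s : RatFunc ℂ) ≠ 0 := by
  have h : (RatFunc.X - RatFunc.C s : RatFunc ℂ) = algebraMap _ _ (X - C s) := by
    simp [RatFunc.algebraMap_X, RatFunc.algebraMap_C]
  rw [h]; exact RatFunc.algebraMap_ne_zero (X_sub_C_ne_zero s)

theorem PD.o_add (r : ℂ) (k : ℤ) (f g : RatFunc ℂ) (hf : f ≠ 0) (hg : g ≠ 0) (hfg : f + g ≠ 0)
    (h1 : k ≤ PD.o r f) (h2 : k ≤ PD.o r g) : k ≤ PD.o r (f + g) := by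
  obtain ⟨p, q, hp, hq, rfl⟩ := PD.rep f hf
  obtain ⟨p', q', hp', hq', rfl⟩ := PD.rep g hg
  have e : algebraMap ℂ[X] (RatFunc ℂ) p / algebraMap _ _ q + algebraMap _ _ p' / algebraMap _ _ q' =
      algebraMap _ _ (p * q' + q * p') / algebraMap _ _ (q * q') := by
    rw [div_add_div _ _ (RatFunc.algebraMap_ne_zero hq) (RatFunc.algebraMap_ne_zero hq')]
    simp only [map_add, map_mul]
  rw [e] at hfg ⊢
  have hne : p * q' + q * p' ≠ 0 := by
    intro h; rw [h] at hfg; simp at hfg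
  rw [PD.o_div _ _ _ hp hq] at h1
  rw [PD.o_div _ _ _ hp' hq'] at h2
  rw [PD.o_div _ _ _ hne (mul_ne_zero hq hq'), rootMultiplicity_mul (mul_ne_zero hq hq')]
  have h3 := rootMultiplicity_add r hne
  rw [rootMultiplicity_mul (mul_ne_zero hp hq'), rootMultiplicity_mul (mul_ne_zero hq hp')] at h3
  push_cast
  rcases min_le_iff.1 h3 with h3 | h3 <;> omega

theorem PD.cube_of_o (f : RatFunc ℂ) (hf : f ≠ 0) (h : ∀ r, (3 : ℤ) ∣ PD.o r f) :
    ∃ g, f = g ^ 3 := by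
  obtain ⟨p, q, hp, hq, rfl⟩ := PD.rep f hf
  have hq' : algebraMap ℂ[X] (RatFunc ℂ) q ≠ 0 := RatFunc.algebraMap_ne_zero hq
  set M := p * q ^ 2 with hM
  have hM0 : M ≠ 0 := mul_ne_zero hp (pow_ne_zero _ hq)
  have hdvd : ∀ r, 3 ∣ M.roots.count r := by
    intro r
    have h1 := h r
    rw [PD.o_div _ _ _ hp hq] at h1
    rw [count_roots, hM, rootMultiplicity_mul hM0, pow_two, rootMultiplicity_mul (mul_ne_zero hq hq)]
    omega
  obtain ⟨s, hs⟩ : ∃ s : Multiset ℂ, M.roots = 3 • s :=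
    Multiset.exists_smul_of_dvd_count _ (fun a _ => hdvd a)
  obtain ⟨c, hc⟩ := IsAlgClosed.exists_pow_nat_eq M.leadingCoeff (n := 3) (by norm_num)
  have hMc : M = (C c * (s.map (fun a => X - C a)).prod) ^ 3 := by
    have := (IsAlgClosed.splits M).eq_prod_roots
    rw [hs, Multiset.map_nsmul, Multiset.prod_nsmul, ← hc, C_pow, ← mul_pow] at this
    exact this
  refine ⟨algebraMap _ _ (C c * (s.map (fun a => X - C a)).prod) / algebraMap _ _ q, ?_⟩
  rw [div_pow, ← map_pow, ← hMc, hM, map_mul, map_pow]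
  field_simp

theorem PD.o_iota (ι : RatFunc ℂ →+* RatFunc ℂ) (hC : ∀ a, ι (RatFunc.C a) = RatFunc.C a)
    (hX : ι RatFunc.X = -(RatFunc.X)⁻¹) (r s : ℂ) (hrs : r * s = -1) (f : RatFunc ℂ) (hf : f ≠ 0) :
    PD.o r (ι f) = PD.o s f := by
  have hr0 : r ≠ 0 := by rintro rfl; simp at hrs
  have hs0 : s ≠ 0 := by rintro rfl; simp at hrs
  have hX0 : (RatFunc.X : RatFunc ℂ) ≠ 0 := RatFunc.X_ne_zero
  have hoX : PD.o r RatFunc.X = 0 := by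
    have := PD.o_lin r 0
    simpa [hr0.symm] using this
  have hιalg : ∀ c, ι (algebraMap ℂ[X] (RatFunc ℂ) (C c)) = RatFunc.C c := by
    intro c; rw [RatFunc.algebraMap_C, hC]
  have hιX : ι (algebraMap ℂ[X] (RatFunc ℂ) X) = -(RatFunc.X)⁻¹ := by
    rw [RatFunc.algebraMap_X, hX]
  have hinj := RatFunc.algebraMap_injective ℂ
  have hne : ∀ p : ℂ[X], p ≠ 0 → ι (algebraMap _ _ p) ≠ 0 := fun p hp =>
    (map_ne_zero ι).2 (RatFunc.algebraMap_ne_zero hp)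
  have hnn : ∀ p : ℂ[X], p ≠ 0 → 0 ≤ PD.o r (ι (algebraMap _ _ p)) := by
    intro p
    induction p using Polynomial.induction_on' with
    | add p q hp hq =>
      intro hpq
      rcases eq_or_ne p 0 with rfl | hp0
      · rw [zero_add] at hpq ⊢; exact hq hpq
      rcases eq_or_ne q 0 with rfl | hq0
      · rw [add_zero] at hpq ⊢; exact hp hpq
      have := hne _ hpq
      rw [map_add, map_add] at this ⊢
      exact PD.o_add r 0 _ _ (hne _ hp0) (hne _ hq0) this (hp hp0) (hq hq0)
    | monomial n a =>
      intro ha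
      have ha0 : a ≠ 0 := by rintro rfl; simp at ha
      rw [← C_mul_X_pow_eq_monomial, map_mul, map_mul, map_pow, map_pow, hιalg, hιX,
        PD.o_mul r _ _ (by simpa using ha0) (pow_ne_zero _ (neg_ne_zero.2 (inv_ne_zero hX0))), PD.o_C,
        PD.o_pow _ _ (neg_ne_zero.2 (inv_ne_zero hX0)), PD.o_neg _ _ (inv_ne_zero hX0), PD.o_inv _ _ hX0, hoX]
      simp
  have hlin : PD.o r (ι (algebraMap _ _ (X - C s))) = 1 := by
    have e : ι (algebraMap _ _ (X - C s)) = RatFunc.C (-s) * ((RatFunc.X - RatFunc.C r) * (RatFunc.X)⁻¹) := by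
      rw [map_sub, map_sub, hιalg, hιX]
      have : (RatFunc.C r * RatFunc.C s : RatFunc ℂ) = -1 := by
        rw [← map_mul, hrs]; simp
      rw [map_neg]
      field_simp
      linear_combination -this
    rw [e, PD.o_mul _ _ _ (by simpa using hs0) (mul_ne_zero (PD.lin_ne r) (inv_ne_zero hX0)), PD.o_C,
      PD.o_mul _ _ _ (PD.lin_ne r) (inv_ne_zero hX0), PD.o_inv _ _ hX0, hoX, PD.o_lin]
    simp
  have hunit : ∀ p : ℂ[X], p.eval s ≠ 0 → PD.o r (ι (algebraMap _ _ p)) = 0 := by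
    intro p hp
    have hp0 : p ≠ 0 := by rintro rfl; simp at hp
    refine le_antisymm ?_ (hnn p hp0)
    by_contra hcon
    push Not at hcon
    have hd : X - C s ∣ p - C (p.eval s) := by
      rw [dvd_iff_isRoot]; simp
    obtain ⟨g, hg⟩ := hd
    have hCo : PD.o r (ι (algebraMap _ _ (C (p.eval s)))) = 0 := by rw [hιalg, PD.o_C]
    rcases eq_or_ne g 0 with rfl | hg0
    · rw [mul_zero, sub_eq_zero] at hg
      rw [hg, hCo] at hcon; omega
    have h1 : C (p.eval s) = p + (-((X - C s) * g)) := by rw [← hg]; ring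
    have hlg : (X - C s) * g ≠ 0 := mul_ne_zero (X_sub_C_ne_zero s) hg0
    have h2 : (1 : ℤ) ≤ PD.o r (ι (algebraMap _ _ (C (p.eval s)))) := by
      have h3 : ι (algebraMap _ _ (C (p.eval s))) ≠ 0 := hne _ (by simpa using hp)
      rw [h1, map_add, map_add, map_neg, map_neg] at h3 ⊢
      refine PD.o_add r 1 _ _ (hne _ hp0) (neg_ne_zero.2 (hne _ hlg)) h3 (by omega) ?_
      rw [PD.o_neg _ _ (hne _ hlg), map_mul, map_mul, PD.o_mul _ _ _ (hne _ (X_sub_C_ne_zero s)) (hne _ hg0), hlin]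
      have := hnn g hg0
      omega
    omega
  have hpoly : ∀ p : ℂ[X], p ≠ 0 → PD.o r (ι (algebraMap _ _ p)) = p.rootMultiplicity s := by
    intro p hp
    obtain ⟨q, hq, hnd⟩ := exists_eq_pow_rootMultiplicity_mul_and_not_dvd p hp s
    have hqs : q.eval s ≠ 0 := fun h => hnd (dvd_iff_isRoot.2 h)
    have hq0 : q ≠ 0 := by rintro rfl; simp at hqs
    conv_lhs => rw [hq]
    have hL := hne _ (X_sub_C_ne_zero s)
    rw [map_mul, map_mul, map_pow, map_pow, PD.o_mul _ _ _ (pow_ne_zero _ hL) (hne _ hq0), PD.o_pow _ _ hL,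
      hlin, hunit q hqs]
    ring
  obtain ⟨p, q, hp, hq, rfl⟩ := PD.rep f hf
  rw [PD.o_div _ _ _ hp hq, map_div₀, div_eq_mul_inv, PD.o_mul _ _ _ (hne _ hp) (inv_ne_zero (hne _ hq)),
    PD.o_inv _ _ (hne _ hq), hpoly p hp, hpoly q hq]
  ring
end PDord

section PDclass

theorem PD.nsq (z : RatFunc ℂ) : z ^ 2 ≠ RatFunc.X ^ 2 * (RatFunc.X ^ 2 + 1) := by
  intro h
  have hX0 : (RatFunc.X : RatFunc ℂ) ≠ 0 := RatFunc.X_ne_zero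
  have e : (RatFunc.X ^ 2 + 1 : RatFunc ℂ) =
      (RatFunc.X - RatFunc.C Complex.I) * (RatFunc.X - RatFunc.C (-Complex.I)) := by
    have : (RatFunc.C Complex.I * RatFunc.C Complex.I : RatFunc ℂ) = -1 := by
      rw [← map_mul, Complex.I_mul_I]; simp
    rw [map_neg]; linear_combination this
  rw [e] at h
  have hm := mul_ne_zero (PD.lin_ne Complex.I) (PD.lin_ne (-Complex.I))
  have hz : z ≠ 0 := by
    rintro rfl
    exact mul_ne_zero (pow_ne_zero 2 hX0) hm (by rw [← h]; ring)
  have h1 := congrArg (PD.o Complex.I) h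
  have hI : -Complex.I ≠ Complex.I := by
    intro h; exact Complex.I_ne_zero (by linear_combination (-1/2) * h)
  rw [PD.o_pow _ _ hz, PD.o_mul _ _ _ (pow_ne_zero 2 hX0) hm, PD.o_pow _ _ hX0,
    PD.o_mul _ _ _ (PD.lin_ne _) (PD.lin_ne _), PD.o_lin, PD.o_lin, if_pos rfl, if_neg hI] at h1
  push_cast at h1
  omega

/-- The function `u w` on the double cover. -/
noncomputable def PD.w : RatFunc ℂ := RatFunc.C (1 / 4) * (RatFunc.X ^ 2 - (RatFunc.X ^ 2)⁻¹)

/-- The function `u` on the double cover. -/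
noncomputable def PD.u : RatFunc ℂ := RatFunc.C (1 / 2) * (RatFunc.X - (RatFunc.X)⁻¹)

theorem PD.half : (RatFunc.C (1 / 2) : RatFunc ℂ) = 1 / 2 := by
  rw [map_div₀, map_one, map_ofNat]

theorem PD.quarter : (RatFunc.C (1 / 4) : RatFunc ℂ) = 1 / 4 := by
  rw [map_div₀, map_one, map_ofNat]

theorem PD.w_sq : PD.w ^ 2 = PD.u ^ 2 * (PD.u ^ 2 + 1) := by
  have hX0 : (RatFunc.X : RatFunc ℂ) ≠ 0 := RatFunc.X_ne_zero
  rw [PD.w, PD.u, PD.half, PD.quarter]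
  field_simp
  ring

theorem PD.cls (φ ι : RatFunc ℂ →+* RatFunc ℂ) (hφC : ∀ a, φ (RatFunc.C a) = RatFunc.C a)
    (hφX : φ RatFunc.X = PD.u) (hιC : ∀ a, ι (RatFunc.C a) = RatFunc.C a)
    (hιX : ι RatFunc.X = -(RatFunc.X)⁻¹) (x y : RatFunc ℂ)
    (h : y ^ 2 = x ^ 3 + RatFunc.X ^ 2 * (RatFunc.X ^ 2 + 1)) :
    ∃ (k₁ k₂ : ℕ) (g : RatFunc ℂ), (φ y - PD.w) * (φ (RatFunc.X ^ 2 + RatFunc.X) - PD.w) ^ k₁ *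
      (φ (RatFunc.X ^ 2 - RatFunc.X) - PD.w) ^ k₂ = g ^ 3 := by
  have hX0 : (RatFunc.X : RatFunc ℂ) ≠ 0 := RatFunc.X_ne_zero
  have hx : x ≠ 0 := by
    rintro rfl; exact PD.nsq y (by rw [h]; ring)
  have hφx : φ x ≠ 0 := (map_ne_zero φ).2 hx
  have hιφ : ∀ f, ι (φ f) = φ f := by
    intro f
    refine PC.hom_ext (ι.comp φ) φ (by simp [hφC, hιC]) ?_ f
    simp only [RingHom.comp_apply, hφX, PD.u, map_mul, hιC, map_sub, map_inv₀, hιX]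
    have e : (-(RatFunc.X)⁻¹ : RatFunc ℂ)⁻¹ = -RatFunc.X :=
      inv_eq_of_mul_eq_one_right (by field_simp)
    rw [e]; ring
  have hιw : ι PD.w = - PD.w := by
    simp only [PD.w, map_mul, hιC, map_sub, map_inv₀, hιX, map_pow]
    rw [neg_sq, inv_pow, inv_inv]; ring
  set α := φ y - PD.w with hα
  set α' := φ y + PD.w with hα'
  have hια : ι α = α' := by rw [hα, map_sub, hιφ, hιw, hα']; ring
  have hprod : α * α' = φ x ^ 3 := by
    have := congrArg φ h
    simp only [map_pow, map_add, map_mul, map_one, hφX] at this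
    rw [hα, hα']; linear_combination this - PD.w_sq
  have hp0 : α * α' ≠ 0 := by rw [hprod]; exact pow_ne_zero _ hφx
  have ha0 : α ≠ 0 := left_ne_zero_of_mul hp0
  have ha0' : α' ≠ 0 := right_ne_zero_of_mul hp0
  have hop : ∀ r, PD.o r α + PD.o r α' = 3 * PD.o r (φ x) := by
    intro r
    rw [← PD.o_mul _ _ _ ha0 ha0', hprod, PD.o_pow _ _ hφx]; norm_num
  have hoX : ∀ r, PD.o r RatFunc.X = if (0:ℂ) = r then 1 else 0 := by
    intro r
    have := PD.o_lin r 0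
    simpa using this
  have hA1 : φ (RatFunc.X ^ 2 + RatFunc.X) - PD.w = RatFunc.C (1 / 2) * ((RatFunc.X - RatFunc.C 1) ^ 2 *
      ((RatFunc.X - RatFunc.C (-1)) * (RatFunc.X ^ 2)⁻¹)) := by
    simp only [map_add, map_pow, hφX, PD.u, PD.w, PD.half, PD.quarter, map_one, map_neg]
    field_simp
    ring
  have hA2 : φ (RatFunc.X ^ 2 - RatFunc.X) - PD.w = RatFunc.C (-1 / 2) * ((RatFunc.X - RatFunc.C 1) *
      ((RatFunc.X - RatFunc.C (-1)) ^ 2 * (RatFunc.X ^ 2)⁻¹)) := by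
    have e : (RatFunc.C (-1 / 2) : RatFunc ℂ) = -1 / 2 := by
      rw [map_div₀, map_neg, map_one, map_ofNat]
    simp only [map_sub, map_pow, hφX, PD.u, PD.w, PD.half, PD.quarter, map_one, map_neg, e]
    field_simp
    ring
  have l1 := PD.lin_ne 1
  have l2 := PD.lin_ne (-1)
  have hXi : ((RatFunc.X : RatFunc ℂ) ^ 2)⁻¹ ≠ 0 := inv_ne_zero (pow_ne_zero 2 hX0)
  have c1 : (RatFunc.C (1 / 2) : RatFunc ℂ) ≠ 0 := by simp
  have c2 : (RatFunc.C (-1 / 2) : RatFunc ℂ) ≠ 0 := by simp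
  set A₁ := φ (RatFunc.X ^ 2 + RatFunc.X) - PD.w
  set A₂ := φ (RatFunc.X ^ 2 - RatFunc.X) - PD.w
  have hA10 : A₁ ≠ 0 := by
    rw [hA1]
    exact mul_ne_zero c1 (mul_ne_zero (pow_ne_zero 2 l1) (mul_ne_zero l2 hXi))
  have hA20 : A₂ ≠ 0 := by
    rw [hA2]
    exact mul_ne_zero c2 (mul_ne_zero l1 (mul_ne_zero (pow_ne_zero 2 l2) hXi))
  have ho1 : ∀ r, PD.o r A₁ = 2 * (if (1:ℂ) = r then 1 else 0) + (if (-1:ℂ) = r then 1 else 0) -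
      2 * (if (0:ℂ) = r then 1 else 0) := by
    intro r
    rw [hA1, PD.o_mul _ _ _ c1 (mul_ne_zero (pow_ne_zero 2 l1) (mul_ne_zero l2 hXi)), PD.o_C,
      PD.o_mul _ _ _ (pow_ne_zero 2 l1) (mul_ne_zero l2 hXi), PD.o_mul _ _ _ l2 hXi,
      PD.o_inv _ _ (pow_ne_zero 2 hX0), PD.o_pow _ _ hX0, PD.o_pow _ _ l1, PD.o_lin, PD.o_lin, hoX]
    push_cast; ring
  have ho2 : ∀ r, PD.o r A₂ = (if (1:ℂ) = r then 1 else 0) + 2 * (if (-1:ℂ) = r then 1 else 0) -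
      2 * (if (0:ℂ) = r then 1 else 0) := by
    intro r
    rw [hA2, PD.o_mul _ _ _ c2 (mul_ne_zero l1 (mul_ne_zero (pow_ne_zero 2 l2) hXi)), PD.o_C,
      PD.o_mul _ _ _ l1 (mul_ne_zero (pow_ne_zero 2 l2) hXi), PD.o_mul _ _ _ (pow_ne_zero 2 l2) hXi,
      PD.o_inv _ _ (pow_ne_zero 2 hX0), PD.o_pow _ _ hX0, PD.o_pow _ _ l2, PD.o_lin, PD.o_lin, hoX]
    push_cast; ring
  have hw : PD.w = RatFunc.C (1 / 4) * ((RatFunc.X - RatFunc.C 1) * ((RatFunc.X - RatFunc.C (-1)) *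
      ((RatFunc.X - RatFunc.C Complex.I) * ((RatFunc.X - RatFunc.C (-Complex.I)) * (RatFunc.X ^ 2)⁻¹)))) := by
    have : (RatFunc.C Complex.I * RatFunc.C Complex.I : RatFunc ℂ) = -1 := by
      rw [← map_mul, Complex.I_mul_I]; simp
    rw [PD.w, map_one, map_neg, map_neg, map_one]
    field_simp
    linear_combination (RatFunc.X ^ 2 - 1) * this
  have l3 := PD.lin_ne Complex.I
  have l4 := PD.lin_ne (-Complex.I)
  have c4 : (RatFunc.C (1 / 4) : RatFunc ℂ) ≠ 0 := by simp
  have hw0 : PD.w ≠ 0 := by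
    rw [hw]
    exact mul_ne_zero c4 (mul_ne_zero l1 (mul_ne_zero l2 (mul_ne_zero l3 (mul_ne_zero l4 hXi))))
  have how : ∀ r, r ≠ 0 → r ≠ 1 → r ≠ -1 → r ≠ Complex.I → r ≠ -Complex.I → PD.o r PD.w = 0 := by
    intro r h0 h1 h2 h3 h4
    rw [hw, PD.o_mul _ _ _ c4 (mul_ne_zero l1 (mul_ne_zero l2 (mul_ne_zero l3 (mul_ne_zero l4 hXi)))),
      PD.o_mul _ _ _ l1 (mul_ne_zero l2 (mul_ne_zero l3 (mul_ne_zero l4 hXi))),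
      PD.o_mul _ _ _ l2 (mul_ne_zero l3 (mul_ne_zero l4 hXi)),
      PD.o_mul _ _ _ l3 (mul_ne_zero l4 hXi), PD.o_mul _ _ _ l4 hXi,
      PD.o_inv _ _ (pow_ne_zero 2 hX0), PD.o_pow _ _ hX0, PD.o_C, PD.o_lin, PD.o_lin, PD.o_lin, PD.o_lin,
      hoX, if_neg h0.symm, if_neg h1.symm, if_neg h2.symm, if_neg h3.symm, if_neg h4.symm]
    norm_num
  have h2w : (2 : RatFunc ℂ) * PD.w ≠ 0 := mul_ne_zero two_ne_zero hw0
  have ho2w : ∀ r, PD.o r (2 * PD.w) = PD.o r PD.w := by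
    intro r
    have : (2 : RatFunc ℂ) = RatFunc.C 2 := by rw [map_ofNat]
    rw [this, PD.o_mul _ _ _ (by simp) hw0, PD.o_C, zero_add]
  have s1 : ∀ r k, k ≤ PD.o r α → k ≤ PD.o r PD.w → k ≤ PD.o r α' := by
    intro r k h1 h2
    have e : α' = α + 2 * PD.w := by rw [hα, hα']; ring
    rw [← ho2w] at h2
    have := PD.o_add r k α (2 * PD.w) ha0 h2w (by rw [← e]; exact ha0') h1 h2
    rwa [← e] at this
  have s2 : ∀ r k, k ≤ PD.o r α' → k ≤ PD.o r PD.w → k ≤ PD.o r α := by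
    intro r k h1 h2
    have e : α = α' + -(2 * PD.w) := by rw [hα, hα']; ring
    rw [← ho2w, ← PD.o_neg _ _ h2w] at h2
    have := PD.o_add r k α' (-(2 * PD.w)) ha0' (neg_ne_zero.2 h2w) (by rw [← e]; exact ha0) h1 h2
    rwa [← e] at this
  have s3 : ∀ r k, k ≤ PD.o r α → k ≤ PD.o r α' → k ≤ PD.o r PD.w := by
    intro r k h1 h2
    have e : 2 * PD.w = α' + -α := by rw [hα, hα']; ring
    rw [← PD.o_neg _ _ ha0] at h1
    have := PD.o_add r k α' (-α) ha0' (neg_ne_zero.2 ha0) (by rw [← e]; exact h2w) h2 h1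
    rwa [← e, ho2w] at this
  have hgen : ∀ r, r ≠ 0 → r ≠ 1 → r ≠ -1 → (3 : ℤ) ∣ PD.o r α := by
    intro r h0 h1 h2
    have hp := hop r
    by_cases h3 : r = Complex.I
    · have := PD.o_iota ι hιC hιX r r (by rw [h3, Complex.I_mul_I]) α ha0
      rw [hια] at this; omega
    by_cases h4 : r = -Complex.I
    · have := PD.o_iota ι hιC hιX r r (by rw [h4, neg_mul_neg, Complex.I_mul_I]) α ha0
      rw [hια] at this; omega
    have hw' := how r h0 h1 h2 h3 h4
    have t1 := s1 r
    have t2 := s2 r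
    have t3 := s3 r 1
    rw [hw'] at t1 t2 t3
    rcases lt_trichotomy (PD.o r α) 0 with hlt | heq | hgt
    · have u1 := t1 (PD.o r α) le_rfl hlt.le
      by_cases hneg : PD.o r α' ≤ 0
      · have u2 := t2 (PD.o r α') le_rfl hneg
        omega
      · have u2 := t2 0 (by omega) le_rfl
        omega
    · omega
    · have u1 := t1 0 hgt.le le_rfl
      by_cases hpos : 1 ≤ PD.o r α'
      · have := t3 (by omega) hpos; omega
      · omega
  have hpm : (3 : ℤ) ∣ PD.o 1 α + PD.o (-1) α := by
    have := PD.o_iota ι hιC hιX 1 (-1) (by norm_num) α ha0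
    have hp := hop 1
    rw [hια] at this; omega
  obtain ⟨k₁, hk₁⟩ : ∃ k : ℕ, (3 : ℤ) ∣ k - (PD.o 0 α - PD.o 1 α) :=
    ⟨((PD.o 0 α - PD.o 1 α) % 3).toNat, by omega⟩
  obtain ⟨k₂, hk₂⟩ : ∃ k : ℕ, (3 : ℤ) ∣ k - (PD.o 0 α + PD.o 1 α) :=
    ⟨((PD.o 0 α + PD.o 1 α) % 3).toNat, by omega⟩
  obtain ⟨g, hg⟩ := PD.cube_of_o (α * A₁ ^ k₁ * A₂ ^ k₂)
    (mul_ne_zero (mul_ne_zero ha0 (pow_ne_zero _ hA10)) (pow_ne_zero _ hA20)) (by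
      intro r
      rw [PD.o_mul _ _ _ (mul_ne_zero ha0 (pow_ne_zero _ hA10)) (pow_ne_zero _ hA20),
        PD.o_mul _ _ _ ha0 (pow_ne_zero _ hA10), PD.o_pow _ _ hA10, PD.o_pow _ _ hA20, ho1, ho2]
      have n1 : (1:ℂ) ≠ -1 := by norm_num
      have n2 : (-1:ℂ) ≠ 1 := by norm_num
      by_cases h0 : r = 0
      · subst h0
        simp
        omega
      by_cases h1 : r = 1
      · subst h1
        rw [if_pos rfl, if_neg n2, if_neg (zero_ne_one)]
        omega
      by_cases h2 : r = -1
      · subst h2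
        rw [if_neg n1, if_pos rfl, if_neg (by norm_num)]
        omega
      have := hgen r h0 h1 h2
      rw [if_neg (Ne.symm h0), if_neg (Ne.symm h1), if_neg (Ne.symm h2)]
      omega)
  exact ⟨k₁, k₂, g, hg⟩
end PDclass

section PDheight
open Polynomial

/-- Height. -/
noncomputable def PD.H (x : RatFunc ℂ) : ℕ := max (3 * x.num.natDegree) (3 * x.denom.natDegree + 4)

theorem PD.height (x x' : RatFunc ℂ) (hx : x ≠ 0)
    (h : -3 * x ^ 2 * x' = x ^ 3 + 4 * (RatFunc.X ^ 2 * (RatFunc.X ^ 2 + 1))) :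
    PD.H x < PD.H x' := by
  set p := x.num with hp
  set q := x.denom with hq
  set p' := x'.num with hp'
  set q' := x'.denom with hq'
  set F : ℂ[X] := X ^ 2 * (X ^ 2 + 1) with hF
  have hp0 : p ≠ 0 := RatFunc.num_ne_zero hx
  have hq0 : q ≠ 0 := x.denom_ne_zero
  have hq0' : q' ≠ 0 := x'.denom_ne_zero
  have hcop : IsCoprime p q := x.isCoprime_num_denom
  have hcop' : IsCoprime p' q' := x'.isCoprime_num_denom
  have hFd : F.natDegree = 4 := by rw [hF]; compute_degree!
  have hF0 : F ≠ 0 := by intro h0; rw [h0] at hFd; simp at hFd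
  set N := p ^ 3 + C 4 * F * q ^ 3 with hN
  have key : C (-3) * p ^ 2 * q * p' = N * q' := by
    apply RatFunc.algebraMap_injective ℂ
    have ex : algebraMap ℂ[X] (RatFunc ℂ) p / algebraMap _ _ q = x := x.num_div_denom
    have ex' : algebraMap ℂ[X] (RatFunc ℂ) p' / algebraMap _ _ q' = x' := x'.num_div_denom
    rw [← ex, ← ex'] at h
    have a1 : algebraMap ℂ[X] (RatFunc ℂ) q ≠ 0 := RatFunc.algebraMap_ne_zero hq0
    have a2 : algebraMap ℂ[X] (RatFunc ℂ) q' ≠ 0 := RatFunc.algebraMap_ne_zero hq0'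
    have b1 : algebraMap ℂ[X] (RatFunc ℂ) (C (-3)) = -3 := by
      rw [RatFunc.algebraMap_C, map_neg, map_ofNat]
    have b2 : algebraMap ℂ[X] (RatFunc ℂ) (C 4) = 4 := by
      rw [RatFunc.algebraMap_C, map_ofNat]
    simp only [hN, hF, map_mul, map_add, map_pow, map_one, RatFunc.algebraMap_X, b1, b2]
    field_simp at h
    linear_combination h
  obtain ⟨d, hd⟩ : p' ∣ N := by
    have : p' ∣ N * q' := ⟨C (-3) * p ^ 2 * q, by rw [← key]; ring⟩
    exact hcop'.dvd_of_dvd_mul_right this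
  have hdeg : N ≠ 0 ∧ N.natDegree = PD.H x := by
    have d1 : (p ^ 3).natDegree = 3 * p.natDegree := natDegree_pow _ _
    have d2 : (C 4 * F * q ^ 3).natDegree = 3 * q.natDegree + 4 := by
      rw [natDegree_mul (mul_ne_zero (by simp) hF0) (pow_ne_zero 3 hq0), natDegree_C_mul (by norm_num), hFd,
        natDegree_pow]
      ring
    have hdg : N.natDegree = PD.H x := by
      rw [PD.H, ← hp, ← hq]
      rcases lt_or_gt_of_ne (show (p ^ 3).natDegree ≠ (C 4 * F * q ^ 3).natDegree by omega) with hlt | hlt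
      · rw [hN, natDegree_add_eq_right_of_natDegree_lt hlt]; omega
      · rw [hN, natDegree_add_eq_left_of_natDegree_lt hlt]; omega
    refine ⟨?_, hdg⟩
    intro h0
    rw [h0, natDegree_zero, PD.H] at hdg
    omega
  obtain ⟨hN0, hNd⟩ := hdeg
  have hp0' : p' ≠ 0 := by rintro h0; rw [h0, zero_mul] at hd; exact hN0 hd
  have hd0 : d ≠ 0 := by rintro rfl; rw [mul_zero] at hd; exact hN0 hd
  have hdq : C (-3) * p ^ 2 * q = d * q' := by
    apply mul_right_cancel₀ hp0'
    rw [key, hd]; ring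
  have hdN : d ∣ N := ⟨p', by rw [hd]; ring⟩
  have hcdq : IsCoprime d q := by
    have h1 : IsCoprime N q := by
      have : IsCoprime (p ^ 3) q := hcop.pow_left
      have h2 := IsCoprime.add_mul_right_left this (C 4 * F * q ^ 2)
      have e : N = p ^ 3 + C 4 * F * q ^ 2 * q := by rw [hN]; ring
      rw [e]; exact h2
    exact IsCoprime.of_isCoprime_of_dvd_left h1 hdN
  have hu3 : IsUnit (C (-3) : ℂ[X]) := isUnit_C.2 (by norm_num)
  have hu4 : IsUnit (C 4 : ℂ[X]) := isUnit_C.2 (by norm_num)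
  have hdp : d ∣ p ^ 2 := by
    have h1 : d ∣ C (-3) * p ^ 2 * q := ⟨q', hdq⟩
    exact (hu3.dvd_mul_left).1 (hcdq.dvd_of_dvd_mul_right h1)
  have hdF : d ∣ F := by
    have h1 : d ∣ C 4 * F * q ^ 3 := by
      have e : C 4 * F * q ^ 3 = N - p * p ^ 2 := by rw [hN]; ring
      rw [e]; exact dvd_sub hdN (hdp.mul_left _)
    exact (hu4.dvd_mul_left).1 ((hcdq.pow_right).dvd_of_dvd_mul_right h1)
  have g1 : d.natDegree ≤ 4 := hFd ▸ natDegree_le_of_dvd hdF hF0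
  have g2 : d.natDegree ≤ 2 * p.natDegree := by
    rw [← natDegree_pow]; exact natDegree_le_of_dvd hdp (pow_ne_zero 2 hp0)
  have g3 : p'.natDegree + d.natDegree = PD.H x := by
    rw [← hNd, hd, natDegree_mul hp0' hd0]
  have g4 : 3 * p'.natDegree ≤ PD.H x' := le_max_left _ _
  have g5 : 3 * p.natDegree ≤ PD.H x := le_max_left _ _
  have g6 : 4 ≤ PD.H x := le_trans (by omega) (le_max_right _ _)
  have g7 : d.natDegree = 4 → p.natDegree ≠ 2 := by
    intro hd4 hp2
    obtain ⟨e, he⟩ := hdF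
    obtain ⟨e', he'⟩ := hdp
    have he0 : e ≠ 0 := by rintro rfl; rw [mul_zero] at he; exact hF0 he
    have he0' : e' ≠ 0 := by rintro rfl; rw [mul_zero] at he'; exact pow_ne_zero 2 hp0 he'
    have t1 := congrArg natDegree he
    rw [natDegree_mul hd0 he0, hFd, hd4] at t1
    have t2 := congrArg natDegree he'
    rw [natDegree_mul hd0 he0', natDegree_pow, hp2, hd4] at t2
    rw [eq_C_of_natDegree_eq_zero (p := e) (by omega)] at he he0
    rw [eq_C_of_natDegree_eq_zero (p := e') (by omega)] at he' he0'
    set a := e.coeff 0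
    set b := e'.coeff 0
    have ha : a ≠ 0 := by simpa using he0
    have hb : b ≠ 0 := by simpa using he0'
    obtain ⟨c, hc⟩ := IsAlgClosed.exists_pow_nat_eq (a / b) (n := 2) (by norm_num)
    have hfin : (C c * p) ^ 2 = F := by
      rw [mul_pow, he', ← C_pow, hc, he]
      have : (C (a / b) * C b : ℂ[X]) = C a := by rw [← C_mul, div_mul_cancel₀ _ hb]
      linear_combination d * this
    apply PD.nsq (algebraMap ℂ[X] (RatFunc ℂ) (C c * p))
    rw [← map_pow, hfin, hF]
    simp only [map_mul, map_add, map_pow, map_one, RatFunc.algebraMap_X]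
  omega
end PDheight

section PDfinal
open WeierstrassCurve.Affine
open scoped Classical

/-- The right-hand side constant. -/
noncomputable abbrev PD.B : RatFunc ℂ := RatFunc.X ^ 2 * (RatFunc.X ^ 2 + 1)

theorem PD.B_ne : PD.B ≠ 0 := fun h => PD.nsq 0 (by rw [show RatFunc.X ^ 2 * (RatFunc.X ^ 2 + 1) = (0 : RatFunc ℂ) from h]; ring)

/-- First generator. -/
noncomputable def PD.R1 (c : ℂ) (hc : c ^ 3 = 2) : (PD.W PD.B).Point :=
  .some (RatFunc.C c * RatFunc.X) (RatFunc.X ^ 2 + RatFunc.X) ((PD.ns_iff _ PD.B_ne _ _).2 (by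
    have : (RatFunc.C c : RatFunc ℂ) ^ 3 = 2 := by rw [← map_pow, hc, map_ofNat]
    linear_combination -RatFunc.X ^ 3 * this))

/-- Second generator. -/
noncomputable def PD.R2 (c : ℂ) (hc : c ^ 3 = 2) : (PD.W PD.B).Point :=
  .some (-RatFunc.C c * RatFunc.X) (RatFunc.X ^ 2 - RatFunc.X) ((PD.ns_iff _ PD.B_ne _ _).2 (by
    have : (RatFunc.C c : RatFunc ℂ) ^ 3 = 2 := by rw [← map_pow, hc, map_ofNat]
    linear_combination RatFunc.X ^ 3 * this))

theorem PD.nonconst_of_o (r : ℂ) (g : RatFunc ℂ) (h : PD.o r g ≠ 0) : ¬ ∃ c, g = RatFunc.C c := by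
  rintro ⟨c, rfl⟩
  exact h (PD.o_C r c)

theorem PD.u_nonconst : ¬ ∃ c, PD.u = RatFunc.C c := by
  have hX0 : (RatFunc.X : RatFunc ℂ) ≠ 0 := RatFunc.X_ne_zero
  apply PD.nonconst_of_o 1
  have e : PD.u = RatFunc.C (1 / 2) * ((RatFunc.X - RatFunc.C 1) * ((RatFunc.X - RatFunc.C (-1)) * (RatFunc.X)⁻¹)) := by
    rw [PD.u, map_neg, map_one]; field_simp; ring
  have hoX : PD.o 1 RatFunc.X = 0 := by
    have := PD.o_lin 1 0
    simpa using this
  rw [e, PD.o_mul _ _ _ (by simp) (mul_ne_zero (PD.lin_ne _) (mul_ne_zero (PD.lin_ne _) (inv_ne_zero hX0))),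
    PD.o_mul _ _ _ (PD.lin_ne _) (mul_ne_zero (PD.lin_ne _) (inv_ne_zero hX0)),
    PD.o_mul _ _ _ (PD.lin_ne _) (inv_ne_zero hX0), PD.o_inv _ _ hX0, PD.o_lin, PD.o_lin, PD.o_C, hoX,
    if_pos rfl, if_neg (by norm_num)]
  norm_num

theorem PD.Xinv_nonconst : ¬ ∃ c, (-(RatFunc.X)⁻¹ : RatFunc ℂ) = RatFunc.C c := by
  have hX0 : (RatFunc.X : RatFunc ℂ) ≠ 0 := RatFunc.X_ne_zero
  apply PD.nonconst_of_o 0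
  have hoX : PD.o 0 RatFunc.X = 1 := by
    have := PD.o_lin 0 0
    simpa using this
  rw [PD.o_neg _ _ (inv_ne_zero hX0), PD.o_inv _ _ hX0, hoX]
  norm_num

theorem PD.gen (c : ℂ) (hc : c ^ 3 = 2) (ω : RatFunc ℂ) (hω : ω ^ 3 = 1)
    (hω2 : ω ^ 2 + ω + 1 = 0) (P : (PD.W PD.B).Point) :
    ∃ (k₁ k₂ : ℕ) (Q : (PD.W PD.B).Point), P + k₁ • PD.R1 c hc + k₂ • PD.R2 c hc =
      PD.T PD.B PD.B_ne ω hω Q := by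
  have hX0 : (RatFunc.X : RatFunc ℂ) ≠ 0 := RatFunc.X_ne_zero
  obtain ⟨φ, hφC, hφX⟩ := PC.exists_sub _ PD.u_nonconst
  obtain ⟨ι, hιC, hιX⟩ := PC.exists_sub _ PD.Xinv_nonconst
  have hw : PD.w ^ 2 = φ PD.B := by
    simp only [PD.B, map_mul, map_add, map_pow, map_one, hφX]; exact PD.w_sq
  have hu0 : PD.u ≠ 0 := fun h => PD.u_nonconst ⟨0, by rw [h, map_zero]⟩
  have hXu : RatFunc.X = PD.u + PD.u⁻¹ * PD.w := by
    apply mul_left_cancel₀ hu0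
    have e : PD.u * (PD.u + PD.u⁻¹ * PD.w) = PD.u ^ 2 + PD.w := by field_simp
    rw [e, PD.u, PD.w, PD.half, PD.quarter]
    field_simp
    ring
  have hdec : ∀ b, ∃ m n, b = φ m + φ n * PD.w := by
    intro b
    obtain ⟨m, n, rfl⟩ := PC.decomp φ hφC (2 * RatFunc.X) 1 (by
      rw [map_mul, hφX, map_one, map_ofNat, PD.u, PD.half]; field_simp; ring) b
    refine ⟨m + n * RatFunc.X, n * (RatFunc.X)⁻¹, ?_⟩
    rw [map_add, map_mul, map_mul, map_inv₀, hφX]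
    linear_combination φ n * hXu
  have hmain : ∀ P : (PD.W PD.B).Point, ∃ (k₁ k₂ : ℕ) (g : RatFunc ℂ),
      PD.al φ PD.w PD.B P * PD.al φ PD.w PD.B (PD.R1 c hc) ^ k₁ *
        PD.al φ PD.w PD.B (PD.R2 c hc) ^ k₂ = g ^ 3 := by
    intro P
    rcases P with _ | ⟨x, y, h⟩
    · exact ⟨0, 0, 1, by simp [PD.al]⟩
    · exact PD.cls φ ι hφC hφX hιC hιX x y ((PD.ns_iff _ PD.B_ne _ _).1 h)
  obtain ⟨k₁, k₂, g, hg⟩ := hmain P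
  have c1 := PD.al_add φ PD.w PD.B hw PD.nsq (P + k₁ • PD.R1 c hc) (k₂ • PD.R2 c hc)
  have c2 := PD.al_add φ PD.w PD.B hw PD.nsq P (k₁ • PD.R1 c hc)
  have c3 := PD.al_nsmul φ PD.w PD.B hw PD.nsq (PD.R1 c hc) k₁
  have c4 := PD.al_nsmul φ PD.w PD.B hw PD.nsq (PD.R2 c hc) k₂
  have c5 := PD.cub_trans (PD.cub_mul (PD.cub_trans (PD.cub_mul (PD.cub_refl _) c3) c2) c4) c1
  rw [hg] at c5
  obtain ⟨z, hz, hzz⟩ := PD.cub_symm c5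
  obtain ⟨Q, hQ⟩ := PD.ker φ PD.w PD.B PD.B_ne hw PD.nsq hdec ω hω hω2 _ (z * g)
    (by rw [hzz]; ring)
  exact ⟨k₁, k₂, Q, hQ⟩

/-- The additive map as a homomorphism. -/
noncomputable def PD.hom (f : RatFunc ℂ →+* RatFunc ℂ) (hf : f PD.B = PD.B) (a : RatFunc ℂ)
    (ha : a ^ 3 = 1) : (PD.W PD.B).Point →+ (PD.W PD.B).Point where
  toFun := PD.mp PD.B PD.B_ne f hf a ha
  map_zero' := rfl
  map_add' := PD.mp_add _ _ _ _ _ _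

theorem PD.fixed (c : ℂ) (hc : c ^ 3 = 2) (ω : ℂ) (hω2 : ω ^ 2 + ω + 1 = 0) (σ : ℂ →+* ℂ)
    (hσc : σ c = c) (hσω : σ ω = ω) (x y : RatFunc ℂ) (h : y ^ 2 = x ^ 3 + PD.B) :
    PA.cmap σ x = x ∧ PA.cmap σ y = y := by
  set s := PA.cmap σ with hs
  have hsX : s RatFunc.X = RatFunc.X := PA.cmap_X σ
  have hsB : s PD.B = PD.B := by simp only [PD.B, map_mul, map_add, map_pow, map_one, hsX]
  set w : RatFunc ℂ := RatFunc.C ω with hw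
  have hw2 : w ^ 2 + w + 1 = 0 := by
    rw [hw, ← map_pow, ← map_one RatFunc.C, ← map_add, ← map_add, hω2, map_zero]
  have hw3 : w ^ 3 = 1 := by linear_combination (w - 1) * hw2
  have hw3' : (w ^ 2) ^ 3 = 1 := by rw [← pow_mul, mul_comm, pow_mul, hw3, one_pow]
  have hsw : s w = w := by rw [hs, hw, PA.cmap_C, hσω]
  set S := PD.hom s hsB 1 (one_pow 3) with hS
  set M1 := PD.hom (RingHom.id _) rfl w hw3 with hM1
  set M2 := PD.hom (RingHom.id _) rfl (w ^ 2) hw3' with hM2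
  have hT : ∀ Q, PD.T PD.B PD.B_ne w hw3 Q = M1 Q - M2 Q := fun Q => rfl
  have hcomm : ∀ a ha, s a = a → ∀ Q, S (PD.hom (RingHom.id _) rfl a ha Q) =
      PD.hom (RingHom.id _) rfl a ha (S Q) := by
    intro a ha hsa Q
    rcases Q with _ | ⟨X, Y, hXY⟩
    · rfl
    · apply PD.some_congr
      · simp [hsa]
      · simp
  have hR1 : S (PD.R1 c hc) = PD.R1 c hc := by
    apply PD.some_congr
    · rw [map_mul, hsX, hs, PA.cmap_C, hσc, one_mul]
    · rw [map_add, map_pow, hsX]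
  have hR2 : S (PD.R2 c hc) = PD.R2 c hc := by
    apply PD.some_congr
    · rw [map_mul, map_neg, hsX, hs, PA.cmap_C, hσc, one_mul]
    · rw [map_sub, map_pow, hsX]
  have hdesc : ∀ n : ℕ, ∀ (P : (PD.W PD.B).Point) X Y hXY, S P - P = .some X Y hXY → PD.H X = n → False := by
    intro n
    induction n using Nat.strong_induction_on with
    | _ n ih =>
    intro P X Y hXY hP hn
    obtain ⟨k₁, k₂, Q, hQ⟩ := PD.gen c hc w hw3 hw2 P
    have e1 : S P - P = PD.T PD.B PD.B_ne w hw3 (S Q - Q) := by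
      have e2 : S P - P = S (P + k₁ • PD.R1 c hc + k₂ • PD.R2 c hc) -
          (P + k₁ • PD.R1 c hc + k₂ • PD.R2 c hc) := by
        rw [map_add, map_add, map_nsmul, map_nsmul, hR1, hR2]; abel
      rw [e2, hQ, hT, hT, map_sub, map_sub, map_sub, hcomm w hw3 hsw,
        hcomm (w ^ 2) hw3' (by rw [map_pow, hsw])]
      abel
    rw [hP] at e1
    rcases hD : S Q - Q with _ | ⟨X', Y', h'⟩
    · rw [hD] at e1
      have : PD.T PD.B PD.B_ne w hw3 Point.zero = 0 := by
        rw [hT]; change M1 0 - M2 0 = 0; rw [map_zero, map_zero]; exact sub_self 0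
      rw [this] at e1
      exact Point.some_ne_zero hXY e1
    · have q := (PD.ns_iff _ PD.B_ne _ _).1 h'
      have hX' : X' ≠ 0 := by
        rintro rfl; exact PD.nsq Y' (by rw [q]; ring)
      have hlam : (w - w ^ 2) ^ 2 = -3 := by linear_combination (w ^ 2 - 3 * w + 3) * hw2
      have hwn : w - w ^ 2 ≠ 0 := by
        intro h0
        rw [h0] at hlam
        norm_num at hlam
      obtain ⟨h'', hTs⟩ := PD.T_some PD.B PD.B_ne w hw3 hw2 X' Y' (2 * Y' / ((w - w ^ 2) * X')) h' hX'
        (mul_div_cancel₀ _ (mul_ne_zero hwn hX'))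
      set l := 2 * Y' / ((w - w ^ 2) * X') with hl
      have hl' : (w - w ^ 2) * X' * l = 2 * Y' := by
        rw [hl]; exact mul_div_cancel₀ _ (mul_ne_zero hwn hX')
      rw [hD, hTs] at e1
      have hXe : X = l ^ 2 + X' := by
        injection e1
      have hlt : PD.H X' < PD.H X := by
        apply PD.height X' X hX'
        rw [hXe]
        linear_combination ((w - w ^ 2) * X' * l + 2 * Y') * hl' - l ^ 2 * X' ^ 2 * hlam + 4 * q
      exact ih (PD.H X') (by omega) Q X' Y' h' hD rfl
  have hP : S (.some x y ((PD.ns_iff _ PD.B_ne _ _).2 h)) = .some x y ((PD.ns_iff _ PD.B_ne _ _).2 h) := by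
    rcases hD : S (.some x y ((PD.ns_iff _ PD.B_ne _ _).2 h)) - .some x y ((PD.ns_iff _ PD.B_ne _ _).2 h) with _ | ⟨X', Y', h'⟩
    · exact sub_eq_zero.1 hD
    · exact (hdesc _ _ _ _ _ hD rfl).elim
  have hP' : (Point.some (1 * s x) (s y) _ : (PD.W PD.B).Point) = .some x y _ := hP
  injection hP' with h1 h2
  exact ⟨by rw [one_mul] at h1; exact h1, h2⟩
end PDfinal

theorem PD.final (K : Subfield ℂ) (c : ℂ) (hc : c ^ 3 = 2) (ω : ℂ) (hω2 : ω ^ 2 + ω + 1 = 0)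
    (hcK : c ∈ K) (hωK : ω ∈ K) (x y : RatFunc ℂ)
    (h : y ^ 2 = x ^ 3 + RatFunc.X ^ 2 + (RatFunc.X ^ 2)⁻¹) (σ : ℂ →+* ℂ) (hσ : ∀ a ∈ K, σ a = a) :
    PA.cmap σ x = x ∧ PA.cmap σ y = y := by
  obtain ⟨φ, hφC, hφX⟩ := PC.exists_sub _ PC.X2_nonconst
  obtain ⟨ξ, η, hE, rfl, rfl⟩ := PC.reduce φ hφC hφX x y h
  obtain ⟨h1, h2⟩ := PD.fixed c hc ω hω2 σ (hσ _ hcK) (hσ _ hωK) ξ η hE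
  have hcomm : ∀ f, PA.cmap σ (φ f) = φ (PA.cmap σ f) := by
    intro f
    refine PC.hom_ext ((PA.cmap σ).comp φ) (φ.comp (PA.cmap σ)) ?_ ?_ f
    · intro a; simp only [RingHom.comp_apply, hφC, PA.cmap_C]
    · simp only [RingHom.comp_apply, hφX, PA.cmap_X, map_pow]
  constructor
  · rw [map_div₀, hcomm, h1, map_pow, PA.cmap_X]
  · rw [map_div₀, hcomm, h2, map_pow, PA.cmap_X]

theorem PD.cbrt2_pow : cbrt2 ^ 3 = 2 := by
  rw [cbrt2, ← Complex.ofReal_pow, ← Real.rpow_natCast, ← Real.rpow_mul (by norm_num)]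
  norm_num

theorem PD.zeta3_eq : ζ3 ^ 2 + ζ3 + 1 = 0 := by
  have hp : IsPrimitiveRoot ζ3 3 := by
    have := Complex.isPrimitiveRoot_exp 3 (by norm_num)
    simpa [ζ3] using this
  have h1 : ζ3 ≠ 1 := hp.ne_one (by norm_num)
  have h3 : ζ3 ^ 3 = 1 := hp.pow_eq_one
  apply mul_left_cancel₀ (sub_ne_zero.2 h1)
  linear_combination h3

/-- Every affine `ℂ(t)`-rational point `(x, y)` of
`E₂ : y² = x³ + t² + t⁻²` has both coordinates in `K₂(t)`, where `K₂ = ℚ(ζ₃, 2^{1/3})`;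
thus `E₂(ℂ(t)) = E₂(K₂(t))` and `K₂` is the splitting field of `E₂` over `ℚ(t)`. -/
theorem stmt_3 (x y : RatFunc ℂ)
    (h : y ^ 2 = x ^ 3 + RatFunc.X ^ 2 + (RatFunc.X ^ 2)⁻¹) :
    memSubfieldRatFunc K2 x ∧ memSubfieldRatFunc K2 y := by
  have hz : ζ3 ∈ K2 := Subfield.subset_closure (by simp)
  have hc : cbrt2 ∈ K2 := Subfield.subset_closure (by simp)
  have hfix := PD.final K2 cbrt2 PD.cbrt2_pow ζ3 PD.zeta3_eq hc hz x y h
  have hmem : ∀ f : RatFunc ℂ, (∀ σ : ℂ →+* ℂ, (∀ a ∈ K2, σ a = a) → PA.cmap σ f = f) →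
      memSubfieldRatFunc K2 f := by
    intro f hf
    obtain ⟨h1, h2⟩ := PA.mem_of_fixed K2 f hf
    exact ⟨f.num, f.denom, h1, h2, f.denom_ne_zero, f.num_div_denom.symm⟩
  exact ⟨hmem x fun σ hσ => (hfix σ hσ).1, hmem y fun σ hσ => (hfix σ hσ).2⟩
end
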